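/- arXiv:1909.09723 — 4 statements merged into one kernel-verified Lean document; each statement's English description precedes it below -/
import Mathlib

section
/- Let S be a semitopological semigroup, let (X,τ) be a Hausdorff locally convex space whose topology τ is determined by a family Q of seminorms, and let (S,(K,weak)) be a Q-nonexpansive dynamical system where K ⊆ X is a minimal weakly compact S-invariant set (weakly compact, s(K) ⊆ K for every s ∈ S, and containing no proper nonempty weakly compact S-invariant subset). If μ is an S-invariant Radon probability measure on K with its weak topology, then K equals the support of μ and K is totally bounded in the topology τ. -/
open Set MeasureTheory

noncomputable section

universe u v

/-- The weak topology on a topological module `X` over `𝕜`: the coarsest topology making all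
continuous linear functionals continuous. -/
def weakTop (𝕜 : Type*) (X : Type*) [NontriviallyNormedField 𝕜] [AddCommGroup X]
    [Module 𝕜 X] [TopologicalSpace X] : TopologicalSpace X :=
  ⨅ f : X →L[𝕜] 𝕜, TopologicalSpace.induced (⇑f) inferInstance

/-- A semitopological semigroup: multiplication is separately continuous. -/
def IsSemitopologicalSemigroup (S : Type*) [Semigroup S] [TopologicalSpace S] : Prop :=
  (∀ t : S, Continuous fun s => t * s) ∧ (∀ t : S, Continuous fun s => s * t)

open Topology in
theorem aux_tree {Y : Type*} [TopologicalSpace Y] {K : Set Y} (hK : IsCompact K)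
    (hKne : K.Nonempty) (sep : Y → Y → Prop)
    (hstep : ∀ U : Set Y, IsOpen U → (U ∩ K).Nonempty → ∃ U0 U1 : Set Y,
      IsOpen U0 ∧ IsOpen U1 ∧ U0 ⊆ U ∧ U1 ⊆ U ∧ (U0 ∩ K).Nonempty ∧ (U1 ∩ K).Nonempty ∧
      ∀ a ∈ closure U0, ∀ b ∈ closure U1, sep a b) :
    ∃ D : Set Y, D.Countable ∧ ∃ y : (ℕ → Bool) → Y, (∀ σ, y σ ∈ closure D) ∧
      ∀ σ τ, σ ≠ τ → sep (y σ) (y τ) ∨ sep (y τ) (y σ) := by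
  classical
  let T := {U : Set Y // IsOpen U ∧ (U ∩ K).Nonempty}
  have hstep' : ∀ U : T, ∃ g : Bool → T, (∀ b, (g b).1 ⊆ U.1) ∧
      ∀ a ∈ closure (g false).1, ∀ b ∈ closure (g true).1, sep a b := by
    rintro ⟨U, hU, hUK⟩
    obtain ⟨U0, U1, h0, h1, h2, h3, h4, h5, h6⟩ := hstep U hU hUK
    refine ⟨fun b => if b then ⟨U1, h1, h5⟩ else ⟨U0, h0, h4⟩, ?_, ?_⟩
    · intro b
      cases b <;> simpa
    · simpa using h6
  choose g hg1 hg2 using hstep'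
  let U0 : T := ⟨univ, isOpen_univ, by simpa using hKne⟩
  let F : List Bool → T := fun l => List.rec U0 (fun b _ U => g U b) l
  have hF : ∀ b l, F (b :: l) = g (F l) b := fun b l => rfl
  choose x hx using fun l : List Bool => (F l).2.2
  have hmono : ∀ (σ : ℕ → Bool) (n m : ℕ), n ≤ m →
      (F (PiNat.res σ m)).1 ⊆ (F (PiNat.res σ n)).1 := by
    intro σ n m hnm
    induction m, hnm using Nat.le_induction with
    | base => exact subset_rfl
    | succ m _ ih =>
      refine subset_trans ?_ ih
      rw [PiNat.res_succ, hF]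
      exact hg1 _ _
  have hy : ∀ σ : ℕ → Bool, ∃ y ∈ K, MapClusterPt y Filter.atTop (fun n => x (PiNat.res σ n)) := by
    intro σ
    exact hK.exists_mapClusterPt (by simpa using ⟨0, fun n _ => (hx _).2⟩)
  choose y hyK hy using hy
  have hyc : ∀ σ n, y σ ∈ closure (F (PiNat.res σ n)).1 := by
    intro σ n
    have := mapClusterPt_atTop_iff_forall_mem_closure.1 (hy σ) n
    refine closure_mono ?_ this
    rintro _ ⟨m, hm, rfl⟩
    exact hmono σ n m hm (hx _).1
  refine ⟨range x, countable_range x, y, ?_, ?_⟩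
  · intro σ
    have := mapClusterPt_atTop_iff_forall_mem_closure.1 (hy σ) 0
    refine closure_mono ?_ this
    rintro _ ⟨m, hm, rfl⟩
    exact mem_range_self _
  · intro σ τ hne
    have hex : ∃ n, σ n ≠ τ n := Function.ne_iff.1 hne
    have hn := Nat.find_spec hex
    have hlt : ∀ m, m < Nat.find hex → σ m = τ m := fun m hm => by
      simpa using Nat.find_min hex hm
    generalize Nat.find hex = n at hn hlt
    have hres : PiNat.res σ n = PiNat.res τ n := PiNat.res_eq_res.2 hlt
    have h1 := hyc σ (n+1)
    have h2 := hyc τ (n+1)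
    rw [PiNat.res_succ, hF] at h1 h2
    rw [← hres] at h2
    cases hs : σ n <;> cases ht : τ n <;> simp only [hs, ht] at h1 h2 hn
    · exact absurd rfl hn
    · exact Or.inl (hg2 _ _ h1 _ h2)
    · exact Or.inr (hg2 _ _ h2 _ h1)
    · exact absurd rfl hn

theorem aux_support {S Y : Type*} [TopologicalSpace Y] [T2Space Y] [MeasurableSpace Y]
    [BorelSpace Y] (K : Set Y) (π : S → Y → Y) (hK : IsCompact K)
    (htra : ∀ s : S, ContinuousOn (π s) K) (hinv : ∀ s : S, MapsTo (π s) K K)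
    (hmin : ∀ K' ⊆ K, K'.Nonempty → IsCompact K' →
      (∀ s : S, MapsTo (π s) K' K') → K' = K)
    (μ : Measure Y) [IsProbabilityMeasure μ] (hK1 : μ K = 1)
    (hμinv : ∀ s : S, ∀ A ⊆ K, MeasurableSet A → μ {x ∈ K | π s x ∈ A} = μ A) :
    K = {x : Y | ∀ U : Set Y, IsOpen U → x ∈ U → μ U ≠ 0} := by
  have hKc : μ Kᶜ = 0 := (prob_compl_eq_zero_iff hK.measurableSet).2 hK1
  have hUK : ∀ U, μ (U ∩ K) = μ U := by
    intro U
    refine le_antisymm (measure_mono inter_subset_left) ?_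
    calc μ U ≤ μ ((U ∩ K) ∪ Kᶜ) := measure_mono (fun x hx => by
          by_cases h : x ∈ K
          · exact Or.inl ⟨hx, h⟩
          · exact Or.inr h)
      _ ≤ μ (U ∩ K) + μ Kᶜ := measure_union_le _ _
      _ = μ (U ∩ K) := by rw [hKc, add_zero]
  symm
  have hsub : {x : Y | ∀ U : Set Y, IsOpen U → x ∈ U → μ U ≠ 0} ⊆ K := by
    intro x hx
    by_contra h
    exact hx Kᶜ hK.isClosed.isOpen_compl h hKc
  have hcl : IsClosed {x : Y | ∀ U : Set Y, IsOpen U → x ∈ U → μ U ≠ 0} := by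
    rw [← isOpen_compl_iff, isOpen_iff_forall_mem_open]
    intro x hx
    simp only [mem_compl_iff, mem_setOf_eq, not_forall, not_not] at hx
    obtain ⟨U, hU, hxU, h0⟩ := hx
    exact ⟨U, fun y hy h => h U hU hy h0, hU, hxU⟩
  refine hmin _ hsub ?_ (hK.of_isClosed_subset hcl hsub) ?_
  · by_contra hem
    rw [not_nonempty_iff_eq_empty] at hem
    have : μ K = 0 := by
      refine hK.measure_zero_of_nhdsWithin fun x _ => ?_
      have hx : x ∉ {x : Y | ∀ U : Set Y, IsOpen U → x ∈ U → μ U ≠ 0} := by simp [hem]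
      simp only [mem_setOf_eq, not_forall, not_not] at hx
      obtain ⟨U, hU, hxU, h0⟩ := hx
      exact ⟨U, mem_nhdsWithin_of_mem_nhds (hU.mem_nhds hxU), h0⟩
    rw [hK1] at this
    exact one_ne_zero this
  · intro s x hx U hU hxU h0
    have hxK := hsub hx
    obtain ⟨V, hV, hVe⟩ := (continuousOn_iff'.1 (htra s)) U hU
    have hxV : x ∈ V := by
      have : x ∈ π s ⁻¹' U ∩ K := ⟨hxU, hxK⟩
      rw [hVe] at this
      exact this.1
    apply hx V hV hxV
    rw [← hUK V, ← hVe]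
    have := hμinv s (U ∩ K) inter_subset_right (hU.measurableSet.inter hK.measurableSet)
    rw [hUK, h0] at this
    rw [← this]
    congr 1
    ext z
    constructor
    · rintro ⟨h1, h2⟩
      exact ⟨h2, h1, hinv s h2⟩
    · rintro ⟨h1, h2, _⟩
      exact ⟨h2, h1⟩

theorem aux_cover {S Y : Type*} [Semigroup S] [Nonempty S] [TopologicalSpace Y] [T2Space Y]
    [MeasurableSpace Y]
    [BorelSpace Y] (K : Set Y) (π : S → Y → Y) (hK : IsCompact K)
    (hact : ∀ s t : S, ∀ x ∈ K, π (s * t) x = π s (π t x))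
    (htra : ∀ s : S, ContinuousOn (π s) K) (hinv : ∀ s : S, MapsTo (π s) K K)
    (hmin : ∀ K' ⊆ K, K'.Nonempty → IsCompact K' →
      (∀ s : S, MapsTo (π s) K' K') → K' = K)
    (μ : Measure Y) [IsProbabilityMeasure μ]
    (hμinv : ∀ s : S, ∀ A ⊆ K, MeasurableSet A → μ {x ∈ K | π s x ∈ A} = μ A)
    (d : Y → Y → ℝ) (hdsymm : ∀ x y, d x y = d y x) (hdtri : ∀ x y z, d x z ≤ d x y + d y z)
    (hdcl : ∀ y r, IsClosed {x | d x y ≤ r})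
    (hne : ∀ s : S, ∀ x ∈ K, ∀ y ∈ K, d (π s x) (π s y) ≤ d x y)
    (B : Set Y) (hB : IsCompact B) (hBK : B ⊆ K) (hBμ : μ B ≠ 0) (ε : ℝ)
    (hBd : ∀ x ∈ B, ∀ y ∈ B, d x y ≤ ε) :
    ∃ F : Finset Y, K ⊆ ⋃ y ∈ F, {x | d x y ≤ ε + ε} := by
  classical
  have hBs : ∀ s, IsCompact (π s '' B) := fun s => hB.image_of_continuousOn ((htra s).mono hBK)
  have hmeas : ∀ s, μ B ≤ μ (π s '' B) := by
    intro s
    rw [← hμinv s (π s '' B) ?_ (hBs s).measurableSet]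
    · exact measure_mono fun x hx => ⟨hBK hx, mem_image_of_mem _ hx⟩
    · rintro _ ⟨x, hx, rfl⟩
      exact hinv s (hBK hx)
  have hfin : ∃ T : Finset S, ∀ s, ∃ t ∈ T, ¬ Disjoint (π t '' B) (π s '' B) := by
    by_contra hcon
    push Not at hcon
    obtain ⟨f, -, hf⟩ := exists_seq_of_forall_finset_exists (fun _ : S => True)
      (fun t s => Disjoint (π t '' B) (π s '' B)) (fun T _ => by
        obtain ⟨s, hs⟩ := hcon T
        exact ⟨s, trivial, hs⟩)
    have hdis : Pairwise (Function.onFun Disjoint fun n => π (f n) '' B) := by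
      intro m n hmn
      rcases lt_or_gt_of_ne hmn with h | h
      · exact hf m n h
      · exact (hf n m h).symm
    have := Measure.finite_const_le_meas_of_disjoint_iUnion μ (pos_iff_ne_zero.2 hBμ)
      (As := fun n => π (f n) '' B) (fun n => (hBs _).measurableSet) hdis (measure_ne_top _ _)
    have huniv : {n : ℕ | μ B ≤ μ (π (f n) '' B)} = univ := by
      ext n
      simp [hmeas]
    rw [huniv] at this
    exact infinite_univ this
  obtain ⟨T, hT⟩ := hfin
  obtain ⟨b, hb⟩ : B.Nonempty := by
    by_contra h
    rw [not_nonempty_iff_eq_empty] at h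
    exact hBμ (by simp [h])
  have hbK := hBK hb
  refine ⟨T.image fun t => π t b, ?_⟩
  have hclosed : IsClosed (⋃ y ∈ T.image (fun t => π t b), {x | d x y ≤ ε + ε}) :=
    (Finset.finite_toSet _).isClosed_biUnion fun y _ => hdcl y _
  have horb : range (fun s => π s b) ⊆ ⋃ y ∈ T.image (fun t => π t b), {x | d x y ≤ ε + ε} := by
    rintro _ ⟨s, rfl⟩
    obtain ⟨t, ht, hd⟩ := hT s
    rw [not_disjoint_iff] at hd
    obtain ⟨_, ⟨x, hx, rfl⟩, y, hy, hxy⟩ := hd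
    simp only [mem_iUnion]
    refine ⟨π t b, Finset.mem_image_of_mem _ ht, ?_⟩
    have h1 := (hne s b hbK y (hBK hy)).trans (hBd b hb y hy)
    have h2 := (hne t x (hBK hx) b hbK).trans (hBd x hx b hb)
    have h3 := hdtri (π s b) (π s y) (π t b)
    rw [hxy] at h1 h3
    exact h3.trans (add_le_add h1 h2)
  have hsubK : range (fun s => π s b) ⊆ K := by
    rintro _ ⟨s, rfl⟩
    exact hinv s hbK
  have hclK : closure (range (fun s => π s b)) ⊆ K := closure_minimal hsubK hK.isClosed
  have heq : closure (range (fun s => π s b)) = K := by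
    refine hmin _ hclK (range_nonempty _).closure (hK.of_isClosed_subset isClosed_closure hclK) ?_
    intro s
    have : MapsTo (π s) (range (fun s => π s b)) (range (fun s => π s b)) := by
      rintro _ ⟨t, rfl⟩
      exact ⟨s * t, hact s t b hbK⟩
    exact this.closure_of_continuousOn ((htra s).mono hclK)
  rw [← heq]
  exact closure_minimal horb hclosed

theorem aux_weak_cont {X : Type*} [AddCommGroup X] [Module ℝ X] [TopologicalSpace X]
    (f : X →L[ℝ] ℝ) : @Continuous X ℝ (weakTop ℝ X) _ f :=
  continuous_iff_le_induced.2 (iInf_le _ f)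

theorem aux_weak_t2 {X : Type*} [AddCommGroup X] [Module ℝ X] [TopologicalSpace X] [T2Space X]
    [IsTopologicalAddGroup X] [ContinuousSMul ℝ X] [LocallyConvexSpace ℝ X] :
    @T2Space X (weakTop ℝ X) := by
  have key : ∀ x y : X, x ≠ y → ∃ f : X →L[ℝ] ℝ, f x < f y := fun x y hxy =>
    geometric_hahn_banach_point_point hxy
  refine @T2Space.mk X (weakTop ℝ X) ?_
  intro x y hxy
  obtain ⟨f, hf⟩ := key x y hxy
  obtain ⟨c, h1, h2⟩ := exists_between hf
  have hfc := aux_weak_cont f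
  letI := weakTop ℝ X
  exact ⟨f ⁻¹' Iio c, f ⁻¹' Ioi c, isOpen_Iio.preimage hfc,
    isOpen_Ioi.preimage hfc, h1, h2,
    Set.disjoint_left.2 fun z (hz : f z < c) (hz' : c < f z) => lt_asymm hz hz'⟩

theorem aux_weak_closed {X : Type*} [AddCommGroup X] [Module ℝ X] [TopologicalSpace X]
    [IsTopologicalAddGroup X] [ContinuousSMul ℝ X] [LocallyConvexSpace ℝ X] {s : Set X}
    (hs : Convex ℝ s) (hc : IsClosed s) :
    @IsClosed X (weakTop ℝ X) s := by
  rw [← @isOpen_compl_iff X s (weakTop ℝ X), @isOpen_iff_forall_mem_open X (weakTop ℝ X) sᶜ]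
  intro x hx
  obtain ⟨f, u, h1, h2⟩ := geometric_hahn_banach_closed_point hs hc hx
  exact ⟨f ⁻¹' Ioi u, fun z hz hzs => lt_asymm (h1 z hzs) hz,
    @Continuous.isOpen_preimage _ _ (weakTop ℝ X) _ _ (aux_weak_cont f) _ isOpen_Ioi, h2⟩

theorem aux_frag {X : Type*} [AddCommGroup X] [Module ℝ X] [TopologicalSpace X]
    [IsTopologicalAddGroup X] [ContinuousSMul ℝ X] [LocallyConvexSpace ℝ X]
    (p : Seminorm ℝ X) (hp : Continuous p) (K : Set X) (hKne : K.Nonempty)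
    (hK : @IsCompact X (weakTop ℝ X) K) (ε : ℝ) (hε : 0 < ε) :
    ∃ U : Set X, @IsOpen X (weakTop ℝ X) U ∧ (U ∩ K).Nonempty ∧
      ∀ x ∈ U ∩ K, ∀ y ∈ U ∩ K, p (x - y) ≤ ε := by
  by_contra hcon
  push Not at hcon
  obtain ⟨D, hD, y, hyD, hysep⟩ := @aux_tree X (weakTop ℝ X) K hK hKne
    (fun a b => ε / 2 ≤ p (a - b)) (by
      intro U hU hUK
      obtain ⟨x, hx, y, hy, hxy⟩ := hcon U hU hUK
      have hopen : IsOpen {z | p z < ε} := isOpen_lt hp continuous_const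
      have hconv : Convex ℝ {z | p z < ε} := by
        have := p.convex_ball 0 ε
        rwa [p.ball_zero_eq] at this
      obtain ⟨f, hf⟩ := geometric_hahn_banach_open_point (x := x - y) hconv hopen
        (by simpa using hxy.le)
      have hpos : 0 < f (x - y) := by
        have := hf 0 (by simpa using hε)
        simpa using this
      have hfc := aux_weak_cont f
      rw [map_sub] at hpos
      letI := weakTop ℝ X
      refine ⟨U ∩ f ⁻¹' Ioi (f x - (f x - f y) / 4), U ∩ f ⁻¹' Iio (f y + (f x - f y) / 4),
        hU.inter (isOpen_Ioi.preimage hfc), hU.inter (isOpen_Iio.preimage hfc),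
        inter_subset_left, inter_subset_left, ⟨x, ⟨hx.1, ?_⟩, hx.2⟩, ⟨y, ⟨hy.1, ?_⟩, hy.2⟩, ?_⟩
      · simp only [mem_preimage, mem_Ioi]; linarith
      · simp only [mem_preimage, mem_Iio]; linarith
      · intro a ha b hb
        have ha' : f x - (f x - f y) / 4 ≤ f a := by
          have : a ∈ f ⁻¹' Ici (f x - (f x - f y) / 4) :=
            closure_minimal (fun z hz => le_of_lt hz.2) (isClosed_Ici.preimage hfc) ha
          exact this
        have hb' : f b ≤ f y + (f x - f y) / 4 := by
          have : b ∈ f ⁻¹' Iic (f y + (f x - f y) / 4) :=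
            closure_minimal (fun z hz => le_of_lt hz.2) (isClosed_Iic.preimage hfc) hb
          exact this
        by_contra hlt
        push Not at hlt
        have := hf ((2 : ℝ) • (a - b)) (by
          simp only [mem_setOf_eq, map_smul_eq_mul]
          norm_num
          linarith)
        simp only [map_smul, map_sub, smul_eq_mul] at this
        linarith)
  have hsp : TopologicalSpace.IsSeparable (closure (Submodule.span ℝ D : Set X)) :=
    hD.isSeparable.span.closure
  obtain ⟨E, hE, hEc⟩ := hsp
  have hcl : @closure X (weakTop ℝ X) D ⊆ closure (Submodule.span ℝ D : Set X) :=
    @closure_minimal X (weakTop ℝ X) _ _ (Submodule.subset_span.trans subset_closure)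
      (aux_weak_closed (Submodule.convex _).closure isClosed_closure)
  have hq : ∀ σ, ∃ q ∈ E, p (y σ - q) < ε / 4 := by
    intro σ
    have hmem := hEc (hcl (hyD σ))
    have ho : IsOpen {q | p (y σ - q) < ε / 4} :=
      isOpen_lt (hp.comp (continuous_const.sub continuous_id)) continuous_const
    obtain ⟨q, hq1, hq2⟩ := mem_closure_iff.1 hmem _ ho (by simp; positivity)
    exact ⟨q, hq2, hq1⟩
  choose q hqE hq using hq
  have hinj : Function.Injective (fun σ => (⟨q σ, hqE σ⟩ : E)) := by
    intro σ τ h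
    have h' : q σ = q τ := congrArg Subtype.val h
    by_contra hne
    have h1 := hq σ
    have h2 := hq τ
    rw [← h'] at h2
    have h3 : p (y σ - y τ) < ε / 2 := by
      have := map_sub_le_add p (y σ - q σ) (y τ - q σ)
      rw [sub_sub_sub_cancel_right] at this
      linarith
    rcases hysep σ τ hne with h | h
    · linarith
    · rw [map_sub_rev] at h
      linarith
  have : Countable E := hE.to_subtype
  have hc : Countable (ℕ → Bool) := hinj.countable
  obtain ⟨g, hg⟩ := exists_surjective_nat (ℕ → Bool)
  obtain ⟨n, hn⟩ := hg (fun n => !(g n n))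
  have := congrFun hn n
  simp at this

/-- **Lemma (local)**: if `(S,(K,weak))` is a `Q`-nonexpansive dynamical system on a minimal
weakly compact `S`-invariant set `K` in a Hausdorff locally convex space whose topology is
generated by the seminorm family `Q`, and `μ` is an `S`-invariant Radon probability measure on
`(K, weak)`, then `K` is the support of `μ` and `K` is `τ`-totally bounded. -/
theorem minimal_invariant_measure_support_totallyBounded
    {S : Type u} [Semigroup S] [TopologicalSpace S] [T2Space S]
    (hS : IsSemitopologicalSemigroup S)
    {X : Type v} [AddCommGroup X] [Module ℝ X] [TopologicalSpace X] [T2Space X]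
    {ι : Type v} [Nonempty ι] (Q : SeminormFamily ℝ X ι) (hQ : WithSeminorms Q)
    (K : Set X) (π : S → X → X)
    -- `K` is a nonempty weakly compact set
    (hKne : K.Nonempty) (hKcpt : @IsCompact X (weakTop ℝ X) K)
    -- `(S,(K,weak))` is a dynamical system
    (hinv : ∀ s : S, MapsTo (π s) K K)
    (hact : ∀ s t : S, ∀ x ∈ K, π (s * t) x = π s (π t x))
    (horb : ∀ x ∈ K, @Continuous S X _ (weakTop ℝ X) fun s => π s x)
    (htra : ∀ s : S, @ContinuousOn X X (weakTop ℝ X) (weakTop ℝ X) (π s) K)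
    -- the system is `Q`-nonexpansive
    (hne : ∀ (i : ι) (s : S), ∀ x ∈ K, ∀ y ∈ K, Q i (π s x - π s y) ≤ Q i (x - y))
    -- `K` is a minimal such set
    (hmin : ∀ K' ⊆ K, K'.Nonempty → @IsCompact X (weakTop ℝ X) K' →
      (∀ s : S, MapsTo (π s) K' K') → K' = K)
    -- `μ` is a probability measure on the weak Borel σ-algebra, concentrated on `K`
    (μ : @Measure X (@borel X (weakTop ℝ X)))
    (hprob : @IsProbabilityMeasure X (@borel X (weakTop ℝ X)) μ)
    (hK1 : μ K = 1)
    -- `μ` is a Radon measure: inner regular with respect to weakly compact sets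
    (hradon : ∀ A : Set X, @MeasurableSet X (@borel X (weakTop ℝ X)) A →
      μ A = ⨆ (C : Set X) (_ : C ⊆ A) (_ : @IsCompact X (weakTop ℝ X) C), μ C)
    -- `μ` is `S`-invariant
    (hμinv : ∀ s : S, ∀ A ⊆ K, @MeasurableSet X (@borel X (weakTop ℝ X)) A →
      μ {x ∈ K | π s x ∈ A} = μ A) :
    -- `K` is the support of `μ` ...
    K = {x : X | ∀ U : Set X, @IsOpen X (weakTop ℝ X) U → x ∈ U → μ U ≠ 0} ∧
    -- ... and `K` is `τ`-totally bounded
    ∀ (i : ι), ∀ ε > (0 : ℝ), ∃ F : Finset X, K ⊆ ⋃ y ∈ F, {x : X | Q i (x - y) < ε} := by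
  have := hQ.topologicalAddGroup
  have := hQ.continuousSMul
  have := hQ.toLocallyConvexSpace
  have hT2 : @T2Space X (weakTop ℝ X) := aux_weak_t2
  have hsupp := @aux_support S X (weakTop ℝ X) hT2 (@borel X (weakTop ℝ X))
    (@BorelSpace.mk X (weakTop ℝ X) (@borel X (weakTop ℝ X)) rfl) K π hKcpt htra hinv hmin μ hprob
    hK1 hμinv
  refine ⟨hsupp, ?_⟩
  intro i ε hε
  rcases isEmpty_or_nonempty S with hSe | hSn
  · obtain ⟨x, hx⟩ := hKne
    have : {x} = K := hmin {x} (by simpa using hx) (singleton_nonempty x)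
      (@isCompact_singleton X (weakTop ℝ X) x) (fun s => hSe.elim s)
    refine ⟨{x}, ?_⟩
    rw [← this]
    simpa using hε
  · have hp := hQ.continuous_seminorm i
    obtain ⟨U, hU, ⟨u, huU, huK⟩, hUd⟩ := aux_frag (Q i) hp K hKne hKcpt (ε / 4) (by positivity)
    have hUμ : μ U ≠ 0 := by
      rw [hsupp] at huK
      exact huK U hU huU
    have hUm : @MeasurableSet X (@borel X (weakTop ℝ X)) U :=
      @MeasurableSpace.measurableSet_generateFrom X _ _ hU
    have hKm : @MeasurableSet X (@borel X (weakTop ℝ X)) K := by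
      have h1 : @IsClosed X (weakTop ℝ X) K := @IsCompact.isClosed X (weakTop ℝ X) hT2 K hKcpt
      have h2 : @MeasurableSet X (@borel X (weakTop ℝ X)) Kᶜ :=
        @MeasurableSpace.measurableSet_generateFrom X _ _
          ((@isOpen_compl_iff X K (weakTop ℝ X)).2 h1)
      exact (@MeasurableSet.compl_iff X K (@borel X (weakTop ℝ X))).1 h2
    have hUK : μ (U ∩ K) ≠ 0 := by
      letI := @borel X (weakTop ℝ X)
      intro h0
      have hKc : μ Kᶜ = 0 := (prob_compl_eq_zero_iff hKm).2 hK1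
      apply hUμ
      refine measure_mono_null (t := (U ∩ K) ∪ Kᶜ) (fun x hx => ?_) (measure_union_null h0 hKc)
      by_cases h : x ∈ K
      · exact Or.inl ⟨hx, h⟩
      · exact Or.inr h
    obtain ⟨B, hBU, hB, hBμ⟩ : ∃ B ⊆ U ∩ K, @IsCompact X (weakTop ℝ X) B ∧ μ B ≠ 0 := by
      by_contra hcon
      push Not at hcon
      apply hUK
      rw [hradon (U ∩ K) (@MeasurableSet.inter X (@borel X (weakTop ℝ X)) _ _ hUm hKm)]
      simp only [ENNReal.iSup_eq_zero]
      exact hcon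
    obtain ⟨F, hF⟩ := @aux_cover S X _ hSn (weakTop ℝ X) hT2 (@borel X (weakTop ℝ X))
      (@BorelSpace.mk X (weakTop ℝ X) (@borel X (weakTop ℝ X)) rfl) K π hKcpt hact htra hinv hmin
      μ hprob hμinv (fun x y => Q i (x - y)) (fun x y => map_sub_rev _ _ _)
      (fun x y z => by
        have := map_add_le_add (Q i) (x - y) (y - z)
        rwa [sub_add_sub_cancel] at this)
      (fun y r => aux_weak_closed ((Q i).convex_closedBall y r)
        (isClosed_le (hp.comp (continuous_id.sub continuous_const)) continuous_const))
      (hne i) B hB (hBU.trans inter_subset_right) hBμ (ε / 4)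
      (fun x hx y hy => hUd x (hBU hx) y (hBU hy))
    refine ⟨F, hF.trans ?_⟩
    refine iUnion₂_mono fun y _ x hx => ?_
    simp only [mem_setOf_eq] at hx ⊢
    linarith
end
end

section
/- Let S be a semitopological semigroup, let (S,(K,weak)) be a Q-nonexpansive dynamical system, where K is a weakly compact convex subset of a Hausdorff locally convex space (X,τ) whose topology is determined by a family Q of seminorms, and let Y be a closed linear subspace of ℓ∞(S) containing the constants and invariant under left and right translations. Suppose that for every y ∈ K and every weakly continuous function f: K → ℂ, the function f_y: S → ℂ defined by f_y(s) = f(sy) belongs to Y. If Y has a left invariant mean, then there exists x ∈ K with sx = x for every s ∈ S. -/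
open Set MeasureTheory
open scoped ENNReal

noncomputable section

universe u v

/-- `ℓ∞(S)`: the Banach space of bounded complex valued functions on `S` with the sup norm. -/
abbrev ellInfty (S : Type u) : Type u := lp (fun _ : S => ℂ) ∞

open Topology

theorem aux_step {M : Type*} [TopologicalSpace M] [CompactSpace M] [T2Space M]
    (R : M → M → Prop) (hR : IsOpen {p : M × M | R p.1 p.2})
    (h : ∀ U : Set M, IsOpen U → U.Nonempty → ∃ x ∈ U, ∃ y ∈ U, R x y)
    (U : Set M) (hU : IsOpen U ∧ U.Nonempty) :
    ∃ V : Bool → Set M, (∀ i, (IsOpen (V i) ∧ (V i).Nonempty) ∧ closure (V i) ⊆ U) ∧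
      ∀ x ∈ closure (V false), ∀ y ∈ closure (V true), R x y := by
  obtain ⟨x, hx, y, hy, hxy⟩ := h U hU.1 hU.2
  have h1 : {p : M × M | R p.1 p.2} ∈ 𝓝 (x, y) := hR.mem_nhds hxy
  rw [nhds_prod_eq, Filter.mem_prod_iff] at h1
  obtain ⟨a, ha, b, hb, hab⟩ := h1
  obtain ⟨c, ⟨hc, hcc⟩, hca⟩ := (closed_nhds_basis x).mem_iff.1
    (Filter.inter_mem ha (hU.1.mem_nhds hx))
  obtain ⟨d, ⟨hd, hdc⟩, hdb⟩ := (closed_nhds_basis y).mem_iff.1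
    (Filter.inter_mem hb (hU.1.mem_nhds hy))
  have hc' : closure (interior c) ⊆ c := closure_minimal interior_subset hcc
  have hd' : closure (interior d) ⊆ d := closure_minimal interior_subset hdc
  refine ⟨fun i => if i then interior d else interior c, ?_, ?_⟩
  · intro i
    cases i
    · exact ⟨⟨isOpen_interior, x, mem_interior_iff_mem_nhds.2 hc⟩,
        fun z hz => (hca (hc' hz)).2⟩
    · exact ⟨⟨isOpen_interior, y, mem_interior_iff_mem_nhds.2 hd⟩,
        fun z hz => (hdb (hd' hz)).2⟩
  · intro x hx y hy
    exact hab (Set.mk_mem_prod (hca (hc' hx)).1 (hdb (hd' hy)).1)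

def auxPre (b : ℕ → Bool) : ℕ → List Bool
  | 0 => []
  | n + 1 => b n :: auxPre b n

theorem auxPre_congr (b b' : ℕ → Bool) (n : ℕ) (h : ∀ m < n, b m = b' m) :
    auxPre b n = auxPre b' n := by
  induction n with
  | zero => rfl
  | succ n ih =>
    simp only [auxPre]
    rw [h n (Nat.lt_succ_self n), ih (fun m hm => h m (by omega))]

theorem aux_tree_s1 {M : Type*} [TopologicalSpace M] [CompactSpace M] [T2Space M] [Nonempty M]
    (R : M → M → Prop) (hR : IsOpen {p : M × M | R p.1 p.2})
    (h : ∀ U : Set M, IsOpen U → U.Nonempty → ∃ x ∈ U, ∃ y ∈ U, R x y) :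
    ∃ A : Set M, A.Countable ∧ ∃ x : (ℕ → Bool) → M, (∀ b, x b ∈ closure A) ∧
      ∀ b b', b ≠ b' → R (x b) (x b') ∨ R (x b') (x b) := by
  choose V hV hVR using aux_step R hR h
  let W : List Bool → {U : Set M // IsOpen U ∧ U.Nonempty} := fun l =>
    l.rec ⟨univ, isOpen_univ, univ_nonempty⟩ (fun i _ U => ⟨V U.1 U.2 i, (hV U.1 U.2 i).1⟩)
  have hW : ∀ i l, (W (i :: l)).1 = V (W l).1 (W l).2 i := fun i l => rfl
  choose a ha using fun l => (W l).2.2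
  have hex : ∀ b : ℕ → Bool, ∃ x, ∀ n, x ∈ closure (W (auxPre b n)).1 ∩ closure (range a) := by
    intro b
    have := IsCompact.nonempty_iInter_of_sequence_nonempty_isCompact_isClosed
      (fun n => closure (W (auxPre b n)).1 ∩ closure (range a)) ?_ ?_ ?_ ?_
    · obtain ⟨x, hx⟩ := this
      exact ⟨x, fun n => mem_iInter.1 hx n⟩
    · intro n
      refine inter_subset_inter_left _ ?_
      exact ((hV (W (auxPre b n)).1 (W (auxPre b n)).2 (b n)).2).trans subset_closure
    · intro n
      exact ⟨a _, subset_closure (ha _), subset_closure (mem_range_self _)⟩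
    · exact (isClosed_closure.inter isClosed_closure).isCompact
    · intro n
      exact isClosed_closure.inter isClosed_closure
  choose x hx using hex
  refine ⟨range a, countable_range a, x, fun b => (hx b 0).2, ?_⟩
  intro b b' hbb
  have hne : ∃ n, b n ≠ b' n := Function.ne_iff.1 hbb
  classical
  have hn := Nat.find_spec hne
  have hm := fun m hm => not_not.1 (Nat.find_min hne (m := m) hm)
  set n := Nat.find hne
  have hp := auxPre_congr b b' n hm
  have h1 := (hx b (n+1)).1
  have h2 := (hx b' (n+1)).1
  simp only [auxPre, hW] at h1 h2
  rw [← hp] at h2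
  have key := hVR (W (auxPre b n)).1 (W (auxPre b n)).2
  cases hb : b n <;> cases hb' : b' n <;> rw [hb] at h1 <;> rw [hb'] at h2
  · exact absurd (hb.trans hb'.symm) hn
  · exact Or.inl (key _ h1 _ h2)
  · exact Or.inr (key _ h2 _ h1)
  · exact absurd (hb.trans hb'.symm) hn

theorem aux_closed {X M : Type*} [AddCommGroup X] [Module ℝ X] [TopologicalSpace X]
    [IsTopologicalAddGroup X] [ContinuousSMul ℝ X] [LocallyConvexSpace ℝ X]
    [TopologicalSpace M] (j : M → X) (hj : ∀ f : X →L[ℝ] ℝ, Continuous fun m => f (j m))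
    (q : Seminorm ℝ X) (hq : Continuous q) (δ : ℝ) :
    IsClosed {p : M × M | q (j p.1 - j p.2) ≤ δ} := by
  rw [← isOpen_compl_iff, isOpen_iff_mem_nhds]
  rintro ⟨x, y⟩ hxy
  have hcv : Convex ℝ {z : X | q z ≤ δ} := by
    have := q.convexOn.convex_le δ
    simpa using this
  obtain ⟨f, u, hf, hfu⟩ := geometric_hahn_banach_closed_point hcv
    (isClosed_le hq continuous_const) (x := j x - j y) hxy
  have ho : IsOpen {p : M × M | u < f (j p.1) - f (j p.2)} :=
    isOpen_lt continuous_const (((hj f).comp continuous_fst).sub ((hj f).comp continuous_snd))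
  refine Filter.mem_of_superset (ho.mem_nhds ?_) ?_
  · simpa using hfu
  · intro p hp hp'
    have := hf _ hp'
    simp only [map_sub] at this
    exact lt_asymm this hp

theorem aux_frag_s1 {X M : Type*} [AddCommGroup X] [Module ℝ X] [TopologicalSpace X]
    [IsTopologicalAddGroup X] [ContinuousSMul ℝ X] [LocallyConvexSpace ℝ X]
    [TopologicalSpace M] [CompactSpace M] [T2Space M] [Nonempty M]
    (j : M → X) (hj : ∀ f : X →L[ℝ] ℝ, Continuous fun m => f (j m))
    (q : Seminorm ℝ X) (hq : Continuous q) (δ : ℝ) (hδ : 0 < δ) :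
    ∃ U : Set M, IsOpen U ∧ U.Nonempty ∧ ∀ x ∈ U, ∀ y ∈ U, q (j x - j y) ≤ δ := by
  by_contra! hcon
  have hR : IsOpen {p : M × M | δ < q (j p.1 - j p.2)} := by
    have := (aux_closed j hj q hq δ).isOpen_compl
    simpa [compl_ofPred] using this
  obtain ⟨A, hA, x, hxA, hx⟩ := aux_tree_s1 (fun x y => δ < q (j x - j y)) hR hcon
  have hsep : TopologicalSpace.IsSeparable (closure (Submodule.span ℝ (j '' A) : Set X)) :=
    ((hA.image j).isSeparable.span).closure
  obtain ⟨D, hD, hDc⟩ := hsep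
  have hmem : ∀ b, j (x b) ∈ closure (Submodule.span ℝ (j '' A) : Set X) := by
    intro b
    by_contra hb
    obtain ⟨f, u, hf, hfu⟩ := geometric_hahn_banach_closed_point
      (Submodule.span ℝ (j '' A)).convex.closure isClosed_closure hb
    have ho : IsOpen {m : M | u < f (j m)} := isOpen_lt continuous_const (hj f)
    obtain ⟨m, hm, hmA⟩ := mem_closure_iff.1 (hxA b) _ ho hfu
    exact lt_asymm hm (hf _ (subset_closure (Submodule.subset_span ⟨m, hmA, rfl⟩)))
  have hd : ∀ b, ∃ d ∈ D, q (j (x b) - d) < δ / 2 := by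
    intro b
    have ho : IsOpen {z : X | q (j (x b) - z) < δ / 2} :=
      isOpen_lt (hq.comp (continuous_const.sub continuous_id)) continuous_const
    obtain ⟨d, hd, hdD⟩ := mem_closure_iff.1 (hDc (hmem b)) _ ho (by simp [hδ])
    exact ⟨d, hdD, hd⟩
  choose d hdD hd using hd
  have hinj : Function.Injective (fun b => (⟨d b, hdD b⟩ : D)) := by
    intro b b' hbb
    by_contra hne
    have hdd : d b = d b' := congrArg Subtype.val hbb
    have h1 := hd b
    have h2 := hd b'
    rw [← hdd] at h2
    have h3 : q (j (x b) - j (x b')) ≤ q (j (x b) - d b) + q (j (x b') - d b) := by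
      have := map_sub_le_add q (j (x b) - d b) (j (x b') - d b)
      simpa using this
    rcases hx b b' hne with h | h
    · linarith
    · rw [map_sub_rev] at h
      linarith
  have : Countable D := hD.to_subtype
  have h1 : Countable (ℕ → Bool) := hinj.countable
  have h2 : Cardinal.mk (ℕ → Bool) ≤ Cardinal.aleph0 := Cardinal.mk_le_aleph0_iff.2 h1
  have h3 : Cardinal.mk (ℕ → Bool) = Cardinal.continuum := by
    clear h1 h2 this hinj
    simp [-Cardinal.mk_eq_aleph0]
    rw [Cardinal.mk_nat]
    exact Cardinal.two_power_aleph0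
  rw [h3] at h2
  exact absurd h2 (not_le.2 Cardinal.aleph0_lt_continuum)

theorem aux_pos_strict {S M : Type*} [TopologicalSpace M] [CompactSpace M] [T2Space M] [Nonempty M]
    (T : S → C(M, M)) (hmin : ∀ F : Set M, IsClosed F → F.Nonempty →
      (∀ s, ∀ x ∈ F, T s x ∈ F) → F = univ)
    (Λ : C(M, ℝ) →ₗ[ℝ] ℝ) (hpos : ∀ f : C(M, ℝ), (∀ x, 0 ≤ f x) → 0 ≤ Λ f)
    (hone : Λ 1 = 1) (hinv : ∀ (f : C(M, ℝ)) s, Λ (f.comp (T s)) = Λ f)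
    (g : C(M, ℝ)) (hg : ∀ x, 0 ≤ g x) (x : M) (hx : 0 < g x) : 0 < Λ g := by
  let F : Set M := {x | ∀ g : C(M, ℝ), (∀ x, 0 ≤ g x) → 0 < g x → 0 < Λ g}
  have hF : F = univ := by
    apply hmin
    · have : F = ⋂ g : {g : C(M, ℝ) // (∀ x, 0 ≤ g x) ∧ ¬ 0 < Λ g}, {x | g.1 x ≤ 0} := by
        ext x
        simp only [F, mem_ofPred_eq, mem_iInter, Subtype.forall]
        constructor
        · intro h g hg
          by_contra hc
          exact hg.2 (h g hg.1 (not_le.1 hc))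
        · intro h g hg hgx
          by_contra hc
          exact absurd (h g ⟨hg, hc⟩) (not_le.2 hgx)
      rw [this]
      exact isClosed_iInter fun g => isClosed_le g.1.continuous continuous_const
    · by_contra hne
      rw [not_nonempty_iff_eq_empty] at hne
      have h1 : ∀ x : M, ∃ g : C(M, ℝ), (∀ x, 0 ≤ g x) ∧ 0 < g x ∧ Λ g = 0 := by
        intro x
        have hx : x ∉ F := by rw [hne]; exact notMem_empty x
        simp only [F, mem_ofPred_eq, not_forall] at hx
        obtain ⟨g, hg, hgx, hΛ⟩ := hx
        exact ⟨g, hg, hgx, le_antisymm (not_lt.1 hΛ) (hpos g hg)⟩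
      choose G hG0 hGx hGΛ using h1
      obtain ⟨t, ht⟩ := isCompact_univ.elim_finite_subcover (fun x => {y | 0 < G x y})
        (fun x => isOpen_lt continuous_const (G x).continuous)
        (fun x _ => mem_iUnion.2 ⟨x, hGx x⟩)
      let g : C(M, ℝ) := ∑ x ∈ t, G x
      have hgpos : ∀ y, 0 < g y := by
        intro y
        obtain ⟨x, hx, hxy⟩ := mem_iUnion₂.1 (ht (mem_univ y))
        simp only [g, ContinuousMap.sum_apply]
        exact Finset.sum_pos' (fun i _ => hG0 i y) ⟨x, hx, hxy⟩
      have hgΛ : Λ g = 0 := by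
        simp only [g, map_sum, hGΛ, Finset.sum_const_zero]
      obtain ⟨y, -, hy⟩ := isCompact_univ.exists_isMinOn univ_nonempty g.continuous.continuousOn
      have h2 := hpos (g - g y • 1) (fun x => by simpa using hy (mem_univ x))
      rw [map_sub, map_smul, hone, hgΛ] at h2
      have := hgpos y
      simp at h2
      linarith
    · intro s x hx g hg hgx
      rw [← hinv g s]
      exact hx _ (fun y => hg _) hgx
  have hxF : x ∈ F := by rw [hF]; trivial
  exact hxF g hg hx

theorem aux_surj {S M : Type*} [TopologicalSpace M] [CompactSpace M] [T2Space M] [Nonempty M]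
    (T : S → C(M, M)) (hmin : ∀ F : Set M, IsClosed F → F.Nonempty →
      (∀ s, ∀ x ∈ F, T s x ∈ F) → F = univ)
    (Λ : C(M, ℝ) →ₗ[ℝ] ℝ) (hpos : ∀ f : C(M, ℝ), (∀ x, 0 ≤ f x) → 0 ≤ Λ f)
    (hone : Λ 1 = 1) (hinv : ∀ (f : C(M, ℝ)) s, Λ (f.comp (T s)) = Λ f)
    (s : S) : Function.Surjective (T s) := by
  intro y
  by_contra hy
  obtain ⟨g, hg0, hg1, hg⟩ := exists_continuous_zero_one_of_isClosed
    (isCompact_range (T s).continuous).isClosed (isClosed_singleton (x := y))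
    (disjoint_singleton_right.2 hy)
  have h1 := aux_pos_strict T hmin Λ hpos hone hinv g (fun x => (hg x).1) y
    (by rw [hg1 rfl]; simp)
  rw [← hinv g s] at h1
  have : g.comp (T s) = 0 := by
    ext x
    exact hg0 (mem_range_self x)
  rw [this, map_zero] at h1
  exact lt_irrefl _ h1

theorem aux_tb {S M : Type*} [TopologicalSpace M] [CompactSpace M] [T2Space M] [Nonempty M]
    (T : S → C(M, M)) (hmin : ∀ F : Set M, IsClosed F → F.Nonempty →
      (∀ s, ∀ x ∈ F, T s x ∈ F) → F = univ)
    (Λ : C(M, ℝ) →ₗ[ℝ] ℝ) (hpos : ∀ f : C(M, ℝ), (∀ x, 0 ≤ f x) → 0 ≤ Λ f)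
    (hone : Λ 1 = 1) (hinv : ∀ (f : C(M, ℝ)) s, Λ (f.comp (T s)) = Λ f)
    (d : M → M → ℝ) (hsymm : ∀ x y, d x y = d y x)
    (htri : ∀ x y z, d x z ≤ d x y + d y z)
    (δ : ℝ)
    (hcl : IsClosed {p : M × M | d p.1 p.2 ≤ δ})
    (hne : ∀ s x y, d (T s x) (T s y) ≤ d x y)
    (hfr : ∃ U : Set M, IsOpen U ∧ U.Nonempty ∧ ∀ x ∈ U, ∀ y ∈ U, d x y ≤ δ) :
    ∃ t : Finset M, ∀ x, ∃ y ∈ t, d x y ≤ 2 * δ := by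
  classical
  obtain ⟨U, hUo, ⟨x0, hx0⟩, hUd⟩ := hfr
  obtain ⟨g, hg0, hg1, hg⟩ := exists_continuous_zero_one_of_isClosed
    hUo.isClosed_compl (isClosed_singleton (x := x0))
    (disjoint_singleton_right.2 (by simpa using hx0))
  have hc := aux_pos_strict T hmin Λ hpos hone hinv g (fun x => (hg x).1) x0
    (by rw [hg1 rfl]; simp)
  have hmono : ∀ f f' : C(M, ℝ), (∀ x, f x ≤ f' x) → Λ f ≤ Λ f' := by
    intro f f' h
    have := hpos (f' - f) (fun x => by simpa using h x)
    rw [map_sub] at this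
    linarith
  set c := Λ g
  let F : Set M := {x | ∀ f : C(M, ℝ), (∀ y, 0 ≤ f y) → (∀ y, d x y ≤ δ → 1 ≤ f y) → c ≤ Λ f}
  have hF : F = univ := by
    apply hmin
    · rw [← isOpen_compl_iff, isOpen_iff_mem_nhds]
      intro x hx
      simp only [F, mem_compl_iff, mem_ofPred_eq, not_forall, not_le] at hx
      obtain ⟨f, hf0, hf1, hfc⟩ := hx
      obtain ⟨ε, hε, hεc⟩ : ∃ ε : ℝ, 0 < ε ∧ Λ f + ε < c :=
        ⟨(c - Λ f) / 2, by linarith, by linarith⟩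
      let f' : C(M, ℝ) := f + ε • 1
      have hf' : Λ f' < c := by
        simp only [f', map_add, map_smul, hone]
        simpa using hεc
      have hf'x : ∀ y, f' y = f y + ε := by intro y; simp [f']
      have hcl2 : IsClosed ({p : M × M | d p.1 p.2 ≤ δ} ∩ {p | f' p.2 ≤ 1}) :=
        hcl.inter (isClosed_le (f'.continuous.comp continuous_snd) continuous_const)
      have hcl3 := (hcl2.isCompact.image continuous_fst).isClosed
      refine Filter.mem_of_superset (hcl3.isOpen_compl.mem_nhds ?_) ?_
      · rintro ⟨⟨a, b⟩, ⟨h1, h2⟩, rfl⟩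
        have := hf1 b h1
        simp only [mem_ofPred_eq, hf'x] at h2
        linarith
      · intro z hz hzF
        refine absurd (hzF f' (fun y => ?_) (fun y hy => ?_)) (not_le.2 hf')
        · rw [hf'x]; linarith [hf0 y]
        · by_contra hlt
          exact hz ⟨(z, y), ⟨hy, (not_le.1 hlt).le⟩, rfl⟩
    · refine ⟨x0, fun f hf0 hf1 => hmono _ _ fun y => ?_⟩
      by_cases hy : y ∈ U
      · exact (hg y).2.trans (hf1 y (hUd _ hx0 _ hy))
      · rw [hg0 hy]; exact hf0 y
    · intro s x hx f hf0 hf1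
      rw [← hinv f s]
      exact hx _ (fun y => hf0 _) (fun y hy => hf1 _ ((hne s x y).trans hy))
  have hFx : ∀ x, x ∈ F := fun x => by rw [hF]; trivial
  -- separated sets are small
  have hcard : ∀ t : Finset M, (∀ x ∈ t, ∀ y ∈ t, x ≠ y → 2 * δ < d x y) →
      (t.card : ℝ) * c ≤ 1 := by
    intro t ht
    rcases t.eq_empty_or_nonempty with rfl | ⟨a0, ha0⟩
    · simp
    let B : t → Set M := fun x => {y | d x y ≤ δ}
    have hB : ∀ x, IsClosed (B x) := fun x =>
      hcl.preimage (Continuous.prodMk continuous_const continuous_id)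
    have hBd : ∀ x y z, z ∈ B x → z ∈ B y → x = y := by
      intro x y z hx hy
      by_contra hxy
      have h1 := ht x x.2 y y.2 (fun h => hxy (Subtype.ext h))
      have h2 := htri x z y
      rw [hsymm z y] at h2
      simp only [B, mem_ofPred_eq] at hx hy
      linarith
    obtain ⟨ρ, hρ⟩ := PartitionOfUnity.exists_isSubordinate (isClosed_univ (X := M))
      (fun x : t => (⋃ y : {y : t // y ≠ x}, B y)ᶜ)
      (fun x => (isClosed_iUnion_of_finite fun y : {y : t // y ≠ x} => hB y.1).isOpen_compl)
      (by
        intro z _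
        by_cases hz : ∃ x, z ∈ B x
        · obtain ⟨x, hx⟩ := hz
          refine mem_iUnion.2 ⟨x, fun h => ?_⟩
          obtain ⟨y, hy⟩ := mem_iUnion.1 h
          exact y.2 (hBd _ _ z hy hx)
        · refine mem_iUnion.2 ⟨⟨a0, ha0⟩, fun h => ?_⟩
          obtain ⟨y, hy⟩ := mem_iUnion.1 h
          exact hz ⟨_, hy⟩)
    have hzero : ∀ x y z, y ≠ x → z ∈ B y → ρ x z = 0 := by
      intro x y z hyx hz
      by_contra h
      have := hρ x (subset_tsupport _ h)
      exact this (mem_iUnion.2 ⟨⟨y, hyx⟩, hz⟩)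
    have hsum : ∀ z, ∑ x, ρ x z = 1 := by
      intro z
      rw [← finsum_eq_sum_of_fintype]
      exact ρ.sum_eq_one (mem_univ z)
    have hΛc : ∀ x, c ≤ Λ (ρ x) := by
      intro x
      refine hFx x _ (fun y => ρ.nonneg x y) (fun y hy => ?_)
      have := hsum y
      rw [Finset.sum_eq_single x (fun b _ hb => hzero b x y hb.symm hy) (by simp)] at this
      exact this.ge
    have hΛs : ∑ x, Λ (ρ x) = 1 := by
      rw [← map_sum, ← hone]
      congr 1
      ext z
      simpa using hsum z
    have := Finset.sum_le_sum (s := (Finset.univ : Finset t)) (fun x _ => hΛc x)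
    rw [hΛs] at this
    simpa using this
  -- take a separated set of maximal cardinality
  obtain ⟨N, hN⟩ := exists_nat_gt (1 / c)
  let P : ℕ → Prop := fun n => ∃ t : Finset M,
    (∀ x ∈ t, ∀ y ∈ t, x ≠ y → 2 * δ < d x y) ∧ t.card = n
  have hPb : ∀ n, P n → n ≤ N := by
    rintro n ⟨t, ht, rfl⟩
    have h1 := hcard t ht
    have h2 : (t.card : ℝ) ≤ 1 / c := by rwa [le_div_iff₀ hc]
    exact_mod_cast (h2.trans hN.le)
  have hP0 : P 0 := ⟨∅, by simp, rfl⟩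
  obtain ⟨t, ht, htc⟩ : P (Nat.findGreatest P N) := Nat.findGreatest_spec (Nat.zero_le N) hP0
  refine ⟨t, fun x => ?_⟩
  by_contra! hx
  by_cases hxt : x ∈ t
  · have h0 := hx x hxt
    obtain ⟨a, ha⟩ : ∃ a : M, a ∈ U := ⟨x0, hx0⟩
    have h1 := hFx x 0 (fun y => by simp) (fun y hy => by
      have h2 := htri x y x
      rw [hsymm y x] at h2
      linarith)
    rw [map_zero] at h1
    linarith
  have hP : P (t.card + 1) := by
    refine ⟨insert x t, ?_, Finset.card_insert_of_notMem hxt⟩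
    intro a ha b hb hab
    rw [Finset.mem_insert] at ha hb
    rcases ha with rfl | ha <;> rcases hb with rfl | hb
    · exact absurd rfl hab
    · exact hx b hb
    · rw [hsymm]; exact hx a ha
    · exact ht a ha b hb hab
  have := Nat.le_findGreatest (hPb _ hP) hP
  omega

theorem aux_mean {S : Type u} [Semigroup S] {M : Type*} [TopologicalSpace M] [CompactSpace M]
    (T : S → M → M) (hTc : ∀ s, Continuous (T s)) (hT : ∀ s t x, T (s * t) x = T s (T t x))
    (Y : Submodule ℂ (ellInfty S)) (e : ellInfty S) (he : ∀ s : S, e s = 1)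
    (μ : ellInfty S →L[ℂ] ℂ) (hnorm : ‖μ‖ = 1) (hone : μ e = 1)
    (hLIM : ∀ f, f ∈ Y → ∀ s : S, ∀ g : ellInfty S, (∀ t : S, g t = f (s * t)) → μ g = μ f)
    (y : M)
    (hY : ∀ f : C(M, ℝ), ∀ h : ellInfty S, (∀ s, h s = (f (T s y) : ℂ)) → h ∈ Y) :
    ∃ Λ : C(M, ℝ) →ₗ[ℝ] ℝ, (∀ f : C(M, ℝ), (∀ x, 0 ≤ f x) → 0 ≤ Λ f) ∧ Λ 1 = 1 ∧
      ∀ (f : C(M, ℝ)) s, Λ (f.comp ⟨T s, hTc s⟩) = Λ f := by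
  have hb : ∀ f : C(M, ℝ), Memℓp (fun s : S => (f (T s y) : ℂ)) ∞ := by
    intro f
    apply memℓp_infty
    refine ⟨‖f‖, ?_⟩
    rintro _ ⟨s, rfl⟩
    simpa using f.norm_coe_le_norm (T s y)
  let H : C(M, ℝ) → ellInfty S := fun f => ⟨_, hb f⟩
  have hH : ∀ f s, H f s = (f (T s y) : ℂ) := fun f s => rfl
  let Λ : C(M, ℝ) →ₗ[ℝ] ℝ :=
    { toFun := fun f => (μ (H f)).re
      map_add' := by
        intro f g
        have : H (f + g) = H f + H g := by
          ext s
          rw [lp.coeFn_add, Pi.add_apply, hH, hH, hH]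
          simp
        rw [this, map_add, Complex.add_re]
      map_smul' := by
        intro a f
        have : H (a • f) = (a : ℂ) • H f := by
          ext s
          rw [lp.coeFn_smul, Pi.smul_apply, hH, hH]
          simp
        rw [this, map_smul]
        simp }
  have hΛ : ∀ f, Λ f = (μ (H f)).re := fun f => rfl
  refine ⟨Λ, ?_, ?_, ?_⟩
  · intro f hf
    have h1 : ‖(‖f‖ : ℂ) • e - H f‖ ≤ ‖f‖ := by
      refine lp.norm_le_of_forall_le (norm_nonneg f) fun s => ?_
      rw [lp.coeFn_sub, Pi.sub_apply, lp.coeFn_smul, Pi.smul_apply, he, hH, smul_eq_mul, mul_one,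
        ← Complex.ofReal_sub, Complex.norm_real, Real.norm_eq_abs, abs_le]
      have h2 := f.norm_coe_le_norm (T s y)
      rw [Real.norm_eq_abs, abs_le] at h2
      have h3 := hf (T s y)
      constructor <;> linarith
    have h2 := μ.le_opNorm ((‖f‖ : ℂ) • e - H f)
    rw [hnorm, one_mul, map_sub, map_smul, hone, smul_eq_mul, mul_one] at h2
    have h3 := (Complex.re_le_norm _).trans (h2.trans h1)
    rw [Complex.sub_re, Complex.ofReal_re] at h3
    rw [hΛ]
    linarith
  · have : H 1 = e := by
      ext s
      rw [hH, he]
      simp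
    rw [hΛ, this, hone]
    rfl
  · intro f s
    rw [hΛ, hΛ, hLIM (H f) (hY f _ (hH f)) s]
    intro t
    rw [hH, hH, hT]
    rfl

theorem aux_zorn {Z : Type*} [TopologicalSpace Z] [CompactSpace Z] (P : Set Z → Prop)
    (hP : ∀ c : Set (Set Z), (∀ s ∈ c, P s) → P (⋂₀ c)) (K : Set Z)
    (hK : IsClosed K ∧ K.Nonempty ∧ P K) :
    ∃ M ⊆ K, (IsClosed M ∧ M.Nonempty ∧ P M) ∧
      ∀ F ⊆ M, IsClosed F → F.Nonempty → P F → F = M := by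
  have hz : ∀ c ⊆ {C : Set Z | IsClosed C ∧ C.Nonempty ∧ P C}, IsChain (· ⊆ ·) c → c.Nonempty →
      ∃ lb ∈ {C : Set Z | IsClosed C ∧ C.Nonempty ∧ P C}, ∀ s ∈ c, lb ⊆ s := by
    intro c hc hchain hne
    refine ⟨⋂₀ c, ⟨isClosed_sInter fun s hs => (hc hs).1, ?_, hP c fun s hs => (hc hs).2.2⟩,
      fun s hs => sInter_subset_of_mem hs⟩
    refine IsCompact.nonempty_sInter_of_directed_nonempty_isCompact_isClosed (hS := hne.to_subtype) ?_
      (fun s hs => (hc hs).2.1) (fun s hs => (hc hs).1.isCompact) (fun s hs => (hc hs).1)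
    intro a ha b hb
    rcases hchain.total ha hb with h | h
    · exact ⟨a, ha, Subset.rfl, h⟩
    · exact ⟨b, hb, h, Subset.rfl⟩
  obtain ⟨m, hmK, hm⟩ := zorn_superset_nonempty {C : Set Z | IsClosed C ∧ C.Nonempty ∧ P C} hz K hK
  exact ⟨m, hmK, hm.1, fun F hFM h1 h2 h3 =>
      Subset.antisymm hFM (hm.2 (show F ∈ {C : Set Z | IsClosed C ∧ C.Nonempty ∧ P C} from
        ⟨h1, h2, h3⟩) hFM)⟩

theorem aux_main {S : Type u}
    {X : Type v} [AddCommGroup X] [Module ℝ X] [TopologicalSpace X] [T2Space X]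
    {ι : Type v} [Nonempty ι] (Q : SeminormFamily ℝ X ι) (hQ : WithSeminorms Q)
    {Z : Type*} [TopologicalSpace Z] [CompactSpace Z] [T2Space Z] [Nonempty Z]
    (j : Z → X) (hinj : Function.Injective j)
    (hj : ∀ f : X →L[ℝ] ℝ, Continuous fun m => f (j m))
    (hcv : Convex ℝ (range j))
    (T : S → Z → Z) (hTc : ∀ s, Continuous (T s))
    (hne : ∀ (i : ι) (s : S), ∀ x y, Q i (j (T s x) - j (T s y)) ≤ Q i (j x - j y))
    (hΛ : ∀ (M : Set Z) (_ : IsClosed M) (hM : ∀ s, MapsTo (T s) M M) (_ : M.Nonempty),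
      ∃ Λ : C(M, ℝ) →ₗ[ℝ] ℝ, (∀ f : C(M, ℝ), (∀ x, 0 ≤ f x) → 0 ≤ Λ f) ∧ Λ 1 = 1 ∧
      ∀ (f : C(M, ℝ)) s, Λ (f.comp ⟨(hM s).restrict, (hTc s).restrict (hM s)⟩) = Λ f) :
    ∃ z, ∀ s, T s z = z := by
  classical
  have := hQ.topologicalAddGroup
  have := hQ.continuousSMul
  have := hQ.toLocallyConvexSpace
  have hqc : ∀ i, Continuous (Q i) := hQ.continuous_seminorm
  let P1 : Set Z → Prop := fun C => (∀ s, MapsTo (T s) C C) ∧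
    ∀ x ∈ C, ∀ y ∈ C, ∀ a b : ℝ, 0 ≤ a → 0 ≤ b → a + b = 1 → ∀ z, j z = a • j x + b • j y → z ∈ C
  obtain ⟨K, -, ⟨hKc, hKne, hKT, hKcv⟩, hKmin⟩ := aux_zorn P1 (by
    intro c hc
    refine ⟨fun s x hx C hC => (hc C hC).1 s (hx C hC), ?_⟩
    intro x hx y hy a b ha hb hab z hz C hC
    exact (hc C hC).2 x (hx C hC) y (hy C hC) a b ha hb hab z hz) univ
    ⟨isClosed_univ, univ_nonempty, fun s => mapsTo_univ _ _, fun _ _ _ _ _ _ _ _ _ _ _ => trivial⟩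
  obtain ⟨M, hMK, ⟨hMc, hMne, hMT⟩, hMmin⟩ := aux_zorn (fun C => ∀ s, MapsTo (T s) C C) (by
    intro c hc s x hx C hC
    exact hc C hC s (hx C hC)) K ⟨hKc, hKne, hKT⟩
  have hjK : Convex ℝ (j '' K) := by
    rintro _ ⟨x, hx, rfl⟩ _ ⟨y, hy, rfl⟩ a b ha hb hab
    obtain ⟨z, hz⟩ := hcv (mem_range_self x) (mem_range_self y) ha hb hab
    exact ⟨z, hKcv x hx y hy a b ha hb hab z hz, hz⟩
  obtain ⟨Λ, hpos, hone, hinv⟩ := hΛ M hMc hMT hMne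
  have : Nonempty M := hMne.to_subtype
  have : CompactSpace M := isCompact_iff_compactSpace.1 hMc.isCompact
  let TM : S → C(M, M) := fun s => ⟨(hMT s).restrict, (hTc s).restrict (hMT s)⟩
  have hTM : ∀ s x, (TM s x : Z) = T s x := fun s x => rfl
  have hmin : ∀ F : Set M, IsClosed F → F.Nonempty →
      (∀ s, ∀ x ∈ F, TM s x ∈ F) → F = univ := by
    intro F hF hFne hFT
    have h1 : Subtype.val '' F = M := by
      apply hMmin
      · rintro _ ⟨x, -, rfl⟩
        exact x.2
      · exact hMc.isClosedEmbedding_subtypeVal.isClosedMap _ hF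
      · exact hFne.image _
      · rintro s _ ⟨x, hx, rfl⟩
        exact ⟨TM s x, hFT s x hx, rfl⟩
    ext x
    have hx : (x : Z) ∈ Subtype.val '' F := by rw [h1]; exact x.2
    obtain ⟨y, hy, hyx⟩ := hx
    rw [Subtype.ext hyx] at hy
    simp [hy]
  have hsurj : ∀ s, Function.Surjective (TM s) := aux_surj TM hmin Λ hpos hone hinv
  have hjM : ∀ f : X →L[ℝ] ℝ, Continuous fun m : M => f (j m) :=
    fun f => (hj f).comp continuous_subtype_val
  have htb : ∀ i, ∀ δ > 0, ∃ t : Finset M, ∀ x : M, ∃ y ∈ t, Q i (j x - j y) ≤ δ := by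
    intro i δ hδ
    obtain ⟨t, ht⟩ := aux_tb TM hmin Λ hpos hone hinv (fun x y => Q i (j x - j y))
      (fun x y => map_sub_rev _ _ _)
      (fun x y z => by
        have := map_add_le_add (Q i) (j x - j y) (j y - j z)
        simpa using this)
      (δ / 2)
      (aux_closed (fun m : M => j m) hjM (Q i) (hqc i) _)
      (fun s x y => hne i s x y)
      (aux_frag_s1 (fun m : M => j m) hjM (Q i) (hqc i) _ (half_pos hδ))
    refine ⟨t, fun x => ?_⟩
    obtain ⟨y, hy, hxy⟩ := ht x
    exact ⟨y, hy, by linarith⟩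
  have hzero : ∀ i, ∀ x y : M, Q i (j x - j y) = 0 := by
    intro i
    set q := Q i with hqdef
    have htri : ∀ x y z : M, q (j x - j z) ≤ q (j x - j y) + q (j y - j z) := fun x y z => by
      have := map_add_le_add q (j x - j y) (j y - j z)
      simpa using this
    have hbdd : BddAbove (range fun p : M × M => q (j p.1 - j p.2)) := by
      obtain ⟨t, ht⟩ := htb i 1 one_pos
      refine ⟨2 + ∑ a ∈ t, ∑ b ∈ t, q (j a - j b), ?_⟩
      rintro _ ⟨⟨x, y⟩, rfl⟩
      obtain ⟨a, ha, hxa⟩ := ht x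
      obtain ⟨b, hb, hyb⟩ := ht y
      have h1 : q (j a - j b) ≤ ∑ b ∈ t, q (j a - j b) :=
        Finset.single_le_sum (f := fun b : M => q (j a - j b)) (fun _ _ => apply_nonneg _ _) hb
      have h2 : ∑ b ∈ t, q (j a - j b) ≤ ∑ a ∈ t, ∑ b ∈ t, q (j a - j b) :=
        Finset.single_le_sum (f := fun a : M => ∑ b ∈ t, q (j a - j b))
          (fun _ _ => Finset.sum_nonneg fun _ _ => apply_nonneg _ _) ha
      have h3 := htri x a y
      have h4 := htri a b y
      have h5 : q (j b - j y) ≤ 1 := by rw [map_sub_rev]; exact hyb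
      simp only
      linarith
    set D := ⨆ p : M × M, q (j p.1 - j p.2) with hD
    have hDle : ∀ x y : M, q (j x - j y) ≤ D := fun x y => le_ciSup hbdd (x, y)
    suffices hD0 : D ≤ 0 from fun x y => le_antisymm ((hDle x y).trans hD0) (apply_nonneg _ _)
    by_contra! hDpos
    obtain ⟨t, ht⟩ := htb i (D / 2) (half_pos hDpos)
    have htne : t.Nonempty := by
      obtain ⟨y, hy, -⟩ := ht (Classical.arbitrary M)
      exact ⟨y, hy⟩
    have hn : (0 : ℝ) < t.card := by exact_mod_cast htne.card_pos
    set n : ℝ := (t.card : ℝ) with hndef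
    have hu : ∑ a ∈ t, (1 / n) • j a ∈ j '' K := by
      apply hjK.sum_mem
      · intro a _; positivity
      · rw [Finset.sum_const, nsmul_eq_mul, ← hndef, mul_one_div_cancel hn.ne']
      · intro a _; exact ⟨a, hMK a.2, rfl⟩
    obtain ⟨u, huK, hu⟩ := hu
    let r := D - D / (2 * n)
    have hr : r < D := by
      have : 0 < D / (2 * n) := by positivity
      simp only [r]; linarith
    have hur : ∀ y : M, q (j u - j y) ≤ r := by
      intro y
      have h1 : j u - j y = ∑ a ∈ t, (1 / n) • (j a - j y) := by
        rw [hu]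
        simp only [smul_sub, Finset.sum_sub_distrib]
        rw [Finset.sum_const, ← Nat.cast_smul_eq_nsmul ℝ, smul_smul, ← hndef, mul_one_div_cancel hn.ne',
          one_smul]
      obtain ⟨b, hb, hyb⟩ := ht y
      rw [map_sub_rev] at hyb
      have h2 : q (j u - j y) ≤ ∑ a ∈ t, (1 / n) * q (j a - j y) := by
        rw [h1]
        refine (Finset.le_sum_of_subadditive q (map_zero q).le (map_add_le_add q) _ _).trans (Finset.sum_le_sum fun a _ => ?_)
        rw [map_smul_eq_mul, Real.norm_of_nonneg (by positivity)]
      rw [← Finset.mul_sum, ← Finset.add_sum_erase _ _ hb] at h2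
      have h3 : ∑ a ∈ t.erase b, q (j a - j y) ≤ (n - 1) * D := by
        refine (Finset.sum_le_card_nsmul _ _ D fun a _ => hDle a y).trans ?_
        rw [Finset.card_erase_of_mem hb, nsmul_eq_mul, Nat.cast_sub htne.card_pos]
        simp [hndef]
      have h4 : (1 / n) * (q (j b - j y) + ∑ a ∈ t.erase b, q (j a - j y)) ≤
          (1 / n) * (D / 2 + (n - 1) * D) := by gcongr
      refine (h2.trans h4).trans (le_of_eq ?_)
      simp only [r]
      field_simp
      ring
    have hC : {z | z ∈ K ∧ ∀ y : M, q (j z - j y) ≤ r} = K := by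
      apply hKmin
      · exact fun z hz => hz.1
      · have : {z | z ∈ K ∧ ∀ y : M, q (j z - j y) ≤ r} =
            K ∩ ⋂ y : M, {z | q (j z - j y) ≤ r} := by
          ext z; simp
        rw [this]
        refine hKc.inter (isClosed_iInter fun y => ?_)
        exact (aux_closed j hj q (hqc i) r).preimage
          (Continuous.prodMk continuous_id continuous_const)
      · exact ⟨u, huK, hur⟩
      · refine ⟨fun s z hz => ⟨hKT s hz.1, fun y => ?_⟩, ?_⟩
        · obtain ⟨y', rfl⟩ := hsurj s y
          exact (hne i s z y').trans (hz.2 y')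
        · intro x hx y hy a b ha hb hab z hz
          refine ⟨hKcv x hx.1 y hy.1 a b ha hb hab z hz, fun w => ?_⟩
          have h1 : j z - j w = a • (j x - j w) + b • (j y - j w) := by
            rw [hz, smul_sub, smul_sub]
            nth_rewrite 1 [← one_smul ℝ (j w)]
            rw [← hab, add_smul]
            abel
          rw [h1]
          refine (map_add_le_add q _ _).trans ?_
          rw [map_smul_eq_mul, map_smul_eq_mul, Real.norm_of_nonneg ha, Real.norm_of_nonneg hb]
          calc _ ≤ a * r + b * r := by
                gcongr
                · exact hx.2 w
                · exact hy.2 w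
            _ = r := by rw [← add_mul, hab, one_mul]
    have : D ≤ r := by
      apply ciSup_le
      rintro ⟨x, y⟩
      have hx : (x : Z) ∈ {z | z ∈ K ∧ ∀ y : M, q (j z - j y) ≤ r} := by
        rw [hC]; exact hMK x.2
      exact hx.2 y
    linarith
  obtain ⟨z, hz⟩ := hMne
  refine ⟨z, fun s => hinj ?_⟩
  by_contra hc
  obtain ⟨i, hi⟩ := hQ.separating_of_T1 _ (sub_ne_zero.2 hc)
  exact hi (hzero i ⟨T s z, hMT s hz⟩ ⟨z, hz⟩)
/-- **Theorem (Main)**: Let `(S,(K,weak))` be a `Q`-nonexpansive dynamical system, `K` a weakly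
compact convex subset of a Hausdorff locally convex space whose topology is generated by the
seminorm family `Q`, and let `Y` be a closed linear subspace of `ℓ∞(S)` containing constants and
invariant under left and right translations, such that `s ↦ f (π s y)` belongs to `Y` for every
`y ∈ K` and every weakly continuous `f : K → ℂ`.  If `Y` has a left invariant mean, then
`(S,(K,weak))` has a common fixed point. -/
theorem fixedPoint_of_LIM_subspace
    {S : Type u} [Semigroup S] [TopologicalSpace S] [T2Space S]
    (hS : IsSemitopologicalSemigroup S)
    {X : Type v} [AddCommGroup X] [Module ℝ X] [TopologicalSpace X] [T2Space X]
    {ι : Type v} [Nonempty ι] (Q : SeminormFamily ℝ X ι) (hQ : WithSeminorms Q)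
    (K : Set X) (π : S → X → X)
    -- `K` is a nonempty weakly compact convex set
    (hKne : K.Nonempty) (hKcv : Convex ℝ K) (hKcpt : @IsCompact X (weakTop ℝ X) K)
    -- `(S,(K,weak))` is a dynamical system
    (hinv : ∀ s : S, MapsTo (π s) K K)
    (hact : ∀ s t : S, ∀ x ∈ K, π (s * t) x = π s (π t x))
    (horb : ∀ x ∈ K, @Continuous S X _ (weakTop ℝ X) fun s => π s x)
    (htra : ∀ s : S, @ContinuousOn X X (weakTop ℝ X) (weakTop ℝ X) (π s) K)
    -- the system is `Q`-nonexpansive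
    (hne : ∀ (i : ι) (s : S), ∀ x ∈ K, ∀ y ∈ K, Q i (π s x - π s y) ≤ Q i (x - y))
    -- `Y` is a closed linear subspace of `ℓ∞(S)`
    (Y : Submodule ℂ (ellInfty S)) (hYcl : IsClosed (Y : Set (ellInfty S)))
    -- `Y` contains the constants
    (e : ellInfty S) (he : ∀ s : S, e s = 1) (heY : e ∈ Y)
    -- `Y` is invariant under left and right translations
    (hYL : ∀ f ∈ Y, ∀ s : S, ∀ g : ellInfty S, (∀ t : S, g t = f (s * t)) → g ∈ Y)
    (hYR : ∀ f ∈ Y, ∀ s : S, ∀ g : ellInfty S, (∀ t : S, g t = f (t * s)) → g ∈ Y)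
    -- `f_y ∈ Y` for every `y ∈ K` and every weakly continuous `f : K → ℂ`
    (hfy : ∀ y ∈ K, ∀ f : X → ℂ, @ContinuousOn X ℂ (weakTop ℝ X) _ f K →
      ∃ h : ellInfty S, (∀ s : S, h s = f (π s y)) ∧ h ∈ Y)
    -- `Y` has a left invariant mean
    (μ : ellInfty S →L[ℂ] ℂ) (hnorm : ‖μ‖ = 1) (hone : μ e = 1)
    (hLIM : ∀ f, f ∈ Y → ∀ s : S, ∀ g : ellInfty S, (∀ t : S, g t = f (s * t)) → μ g = μ f) :
    ∃ x ∈ K, ∀ s : S, π s x = x := by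
  classical
  have := hQ.topologicalAddGroup
  have := hQ.continuousSMul
  have := hQ.toLocallyConvexSpace
  letI tZ : TopologicalSpace K := @instTopologicalSpaceSubtype X (fun x => x ∈ K) (weakTop ℝ X)
  have hval : @Continuous K X tZ (weakTop ℝ X) Subtype.val :=
    @continuous_subtype_val X (weakTop ℝ X) _
  have hcompZ : CompactSpace K := (@isCompact_iff_compactSpace X (weakTop ℝ X) K).1 hKcpt
  have hfw : ∀ f : X →L[ℝ] ℝ, @Continuous X ℝ (weakTop ℝ X) _ f := fun f =>
    continuous_iff_le_induced.2 (iInf_le _ f)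
  have hj : ∀ f : X →L[ℝ] ℝ, Continuous fun m : K => f m := fun f =>
    @Continuous.comp K X ℝ tZ (weakTop ℝ X) _ _ _ (hfw f) hval
  have hT2 : T2Space K := by
    refine T2Space.of_injective_continuous (Y := (X →L[ℝ] ℝ) → ℝ) (f := fun m f => f m) ?_
      (continuous_pi hj)
    intro x y hxy
    by_contra hne
    obtain ⟨f, hf⟩ := geometric_hahn_banach_point_point (fun h => hne (Subtype.ext h))
    exact hf.ne (congrFun hxy f)
  have : Nonempty K := hKne.to_subtype
  let T : S → K → K := fun s => (hinv s).restrict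
  have hTv : ∀ s x, (T s x : X) = π s x := fun s x => rfl
  have hTc : ∀ s, Continuous (T s) := fun s =>
    @ContinuousOn.mapsToRestrict X X (weakTop ℝ X) (weakTop ℝ X) _ _ _ (htra s) (hinv s)
  obtain ⟨z, hz⟩ := aux_main Q hQ (fun m : K => (m : X)) Subtype.val_injective hj
    (by simpa using hKcv) T hTc (fun i s x y => hne i s x x.2 y y.2) (by
      intro M hMc hMT hMne
      have : CompactSpace M := isCompact_iff_compactSpace.1 hMc.isCompact
      obtain ⟨y, hy⟩ := hMne
      refine aux_mean (fun s => (hMT s).restrict) (fun s => (hTc s).restrict (hMT s)) ?_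
        Y e he μ hnorm hone hLIM ⟨y, hy⟩ ?_
      · intro s t x
        apply Subtype.ext
        apply Subtype.ext
        exact hact s t x.1.1 x.1.2
      · intro f h hh
        obtain ⟨g, -, hg⟩ := f.exists_restrict_eq_forall_mem_of_closed (t := univ)
          (fun _ => trivial) univ_nonempty hMc
        obtain ⟨h', hh', hY'⟩ := hfy y y.2
          (fun x => if hx : x ∈ K then ((g ⟨x, hx⟩ : ℝ) : ℂ) else 0) (by
            refine (@continuousOn_iff_continuous_restrict X ℂ (weakTop ℝ X) _ _ _).2 ?_
            have : Continuous fun m : K => ((g m : ℝ) : ℂ) :=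
              Complex.continuous_ofReal.comp g.continuous
            convert this using 1
            ext m
            simp)
        have : h = h' := by
          ext s
          rw [hh, hh', dif_pos (hinv s y.2), ← hg]
          rfl
        rw [this]
        exact hY')
  exact ⟨z, z.2, fun s => congrArg Subtype.val (hz s)⟩
end
end

section
/- Let S be a semitopological semigroup. If LUC(S) has a left invariant mean, then S has property (G*): every Q-nonexpansive dynamical system (S,(K,weak)), where K is a weakly compact convex subset of a Hausdorff locally convex space whose topology is determined by a family Q of seminorms and the action S × K → K is jointly continuous when K carries the weak topology, has a point x ∈ K with sx = x for all s ∈ S. -/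
open Set MeasureTheory BoundedContinuousFunction

noncomputable section

universe u v

section CbDefs

variable (S : Type u) [Semigroup S] [TopologicalSpace S]

/-- `g` is the family of left translates of `f`: `g s = L_s f` where `L_s f (t) = f (s * t)`. -/
def IsLTranslates (f : S →ᵇ ℂ) (g : S → S →ᵇ ℂ) : Prop :=
  ∀ s t, g s t = f (s * t)

/-- `LUC(S)`: bounded continuous `f` such that `s ↦ L_s f` is norm continuous. -/
def LUCset : Set (S →ᵇ ℂ) :=
  {f | ∃ g, IsLTranslates S f g ∧ Continuous g}

/-- `AP(S)`: bounded continuous `f` whose set of left translates is relatively compact in the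
norm topology of `C(S)`. -/
def APset : Set (S →ᵇ ℂ) :=
  {f | ∃ g, IsLTranslates S f g ∧ IsCompact (closure (Set.range g))}

/-- `WAP(S)`: bounded continuous `f` whose set of left translates is relatively compact in the
weak topology of `C(S)`. -/
def WAPset : Set (S →ᵇ ℂ) :=
  {f | ∃ g, IsLTranslates S f g ∧
    @IsCompact _ (weakTop ℂ (S →ᵇ ℂ)) (@closure _ (weakTop ℂ (S →ᵇ ℂ)) (Set.range g))}

/-- The topology on `C(S)` induced by the multiplicative means. -/
def lmcTop : TopologicalSpace (S →ᵇ ℂ) :=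
  ⨅ μ : {μ : (S →ᵇ ℂ) →L[ℂ] ℂ // ‖μ‖ = 1 ∧ μ 1 = 1 ∧ ∀ f g, μ (f * g) = μ f * μ g},
    TopologicalSpace.induced (⇑μ.1) inferInstance

/-- `LMC(S)`: bounded continuous `f` such that `s ↦ L_s f` is continuous into `C(S)` with the
topology induced by the multiplicative means. -/
def LMCset : Set (S →ᵇ ℂ) :=
  {f | ∃ g, IsLTranslates S f g ∧ @Continuous _ _ _ (lmcTop S) g}

/-- `Y ⊆ C(S)` has a left invariant mean: there is a norm-one functional `μ` on `C(S)` with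
`μ 1 = 1` and `μ (L_s f) = μ f` for all `f ∈ Y` and `s ∈ S`.  (By the Hahn–Banach extension
theorem this is equivalent to the existence of a left invariant mean on the subspace `Y`.) -/
def HasLIM (Y : Set (S →ᵇ ℂ)) : Prop :=
  ∃ μ : (S →ᵇ ℂ) →L[ℂ] ℂ, ‖μ‖ = 1 ∧ μ 1 = 1 ∧
    ∀ f ∈ Y, ∀ g : S → S →ᵇ ℂ, IsLTranslates S f g → ∀ s, μ (g s) = μ f

end CbDefs

/-- Property (G*): every `Q`-nonexpansive, jointly weakly continuous dynamical system
`(S,(K,weak))` on a nonempty weakly compact convex subset of a Hausdorff locally convex space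
has a common fixed point. -/
def PropertyGStar (S : Type u) [Semigroup S] [TopologicalSpace S] : Prop :=
  ∀ (X : Type v) [AddCommGroup X] [Module ℝ X] [TopologicalSpace X] [T2Space X]
    (ι : Type v) [Nonempty ι] (Q : SeminormFamily ℝ X ι), WithSeminorms Q →
    ∀ (K : Set X) (π : S → X → X),
      K.Nonempty → Convex ℝ K → @IsCompact X (weakTop ℝ X) K →
      (∀ s : S, MapsTo (π s) K K) →
      (∀ s t : S, ∀ x ∈ K, π (s * t) x = π s (π t x)) →
      -- the action is jointly continuous when `K` carries the weak topology
      (@ContinuousOn (S × X) X (@instTopologicalSpaceProd S X _ (weakTop ℝ X)) (weakTop ℝ X)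
        (fun q => π q.1 q.2) (Set.univ ×ˢ K)) →
      -- the action is `Q`-nonexpansive
      (∀ (i : ι) (s : S), ∀ x ∈ K, ∀ y ∈ K, Q i (π s x - π s y) ≤ Q i (x - y)) →
      ∃ x ∈ K, ∀ s : S, π s x = x

section Aux

open Topology Filter
open scoped CompactlySupported

lemma aux_isClosed_preimage {X Y : Type*} [AddCommGroup X] [Module ℝ X] [TopologicalSpace X]
    [IsTopologicalAddGroup X] [ContinuousSMul ℝ X] [LocallyConvexSpace ℝ X]
    [TopologicalSpace Y] (j : Y → X)
    (hj : ∀ f : X →L[ℝ] ℝ, Continuous fun y => f (j y))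
    {C : Set X} (hC : Convex ℝ C) (hC' : IsClosed C) : IsClosed (j ⁻¹' C) := by
  rw [← isOpen_compl_iff, isOpen_iff_mem_nhds]
  intro y hy
  obtain ⟨f, u, h1, h2⟩ := geometric_hahn_banach_closed_point hC hC' (x := j y) hy
  have : {z | u < f (j z)} ∈ 𝓝 y := (isOpen_lt continuous_const (hj f)).mem_nhds h2
  filter_upwards [this] with z hz hz'
  exact absurd (h1 _ hz') (not_lt.2 (le_of_lt hz))

lemma aux_convex_sub {X : Type*} [AddCommGroup X] [Module ℝ X] (p : Seminorm ℝ X) (x : X) (r : ℝ) :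
    Convex ℝ {z | p (x - z) ≤ r} := by
  have : {z | p (x - z) ≤ r} = p.closedBall x r := by
    ext z; simp [Seminorm.mem_closedBall, map_sub_rev]
  rw [this]; exact p.convex_closedBall x r

lemma aux_isClosed_ball {X Y : Type*} [AddCommGroup X] [Module ℝ X] [TopologicalSpace X]
    [IsTopologicalAddGroup X] [ContinuousSMul ℝ X] [LocallyConvexSpace ℝ X]
    [TopologicalSpace Y] (j : Y → X)
    (hj : ∀ f : X →L[ℝ] ℝ, Continuous fun y => f (j y))
    (p : Seminorm ℝ X) (hp : Continuous p) (x : X) (r : ℝ) :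
    IsClosed {y | p (x - j y) ≤ r} :=
  aux_isClosed_preimage j hj (aux_convex_sub p x r)
    (isClosed_le (hp.comp (continuous_const.sub continuous_id)) continuous_const)

lemma aux_bounded {X Y : Type*} [AddCommGroup X] [Module ℝ X] [TopologicalSpace X]
    [IsTopologicalAddGroup X] [ContinuousSMul ℝ X] [LocallyConvexSpace ℝ X]
    [TopologicalSpace Y] [CompactSpace Y] [T2Space Y] [Nonempty Y] (j : Y → X)
    (hj : IsInducing fun (y : Y) (f : X →L[ℝ] ℝ) => f (j y))
    (hconv : Convex ℝ (range j))
    (p : Seminorm ℝ X) (hp : Continuous p) :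
    ∃ R, ∀ y, p (j y) ≤ R := by
  have hj' : ∀ f : X →L[ℝ] ℝ, Continuous fun y => f (j y) := fun f =>
    (continuous_apply f).comp hj.continuous
  obtain ⟨n, y0, hy0⟩ : ∃ n : ℕ, (interior {y | p (0 - j y) ≤ n}).Nonempty := by
    apply nonempty_interior_of_iUnion_of_closed
    · intro n; exact aux_isClosed_ball j hj' p hp 0 n
    · refine eq_univ_of_forall fun y => mem_iUnion.2 ?_
      exact exists_nat_ge (p (0 - j y))
  set U := interior {y | p (0 - j y) ≤ n} with hU
  have hex : ∀ (t : Icc (0:ℝ) 1) (y : Y), ∃ z, j z = (1 - (t:ℝ)) • j y0 + (t:ℝ) • j y := by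
    intro t y
    exact hconv (mem_range_self y0) (mem_range_self y) (by linarith [t.2.2]) t.2.1 (by ring)
  choose h hh using hex
  have hcont : Continuous fun q : Icc (0:ℝ) 1 × Y => h q.1 q.2 := by
    rw [hj.continuous_iff, continuous_pi_iff]
    intro f
    have : (fun q : Icc (0:ℝ) 1 × Y => f (j (h q.1 q.2)))
        = fun q => (1 - (q.1:ℝ)) * f (j y0) + (q.1:ℝ) * f (j q.2) := by
      ext q; rw [hh]; simp
    change Continuous (fun q : Icc (0:ℝ) 1 × Y => f (j (h q.1 q.2)))
    rw [this]
    have := (hj' f).comp (continuous_snd (X := Icc (0:ℝ) 1) (Y := Y))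
    exact ((continuous_const.sub (continuous_subtype_val.comp continuous_fst)).mul
      continuous_const).add ((continuous_subtype_val.comp continuous_fst).mul this)
  have hinj : ∀ a b : Y, j a = j b → a = b := by
    intro a b hab
    exact hj.injective (by ext f; simp [hab])
  have h0 : ∀ y, h ⟨0, by simp⟩ y = y0 := fun y => hinj _ _ (by rw [hh]; simp)
  -- positive parameters
  have hcov : (univ : Set Y) ⊆ ⋃ t : {t : Icc (0:ℝ) 1 // 0 < (t:ℝ)}, (h t.1) ⁻¹' U := by
    intro y _
    have hc : Continuous fun t : ℝ => h (projIcc 0 1 zero_le_one t) y :=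
      hcont.comp ((continuous_projIcc (h := zero_le_one)).prodMk continuous_const)
    have hm : (fun t : ℝ => h (projIcc 0 1 zero_le_one t) y) ⁻¹' U ∈ 𝓝 (0:ℝ) := by
      apply hc.continuousAt.preimage_mem_nhds
      apply isOpen_interior.mem_nhds
      have : projIcc (0:ℝ) 1 zero_le_one 0 = ⟨0, by simp⟩ := projIcc_left _
      rw [this, h0]; exact hy0
    have hm2 := (nhdsWithin_le_nhds (s := Ioi (0:ℝ)) hm)
    obtain ⟨t, ht1, ht2⟩ := (inter_mem hm2 (Ioc_mem_nhdsGT (zero_lt_one (α := ℝ)))) |> fun h =>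
      (nonempty_of_mem (f := 𝓝[>] (0:ℝ)) h)
    refine mem_iUnion.2 ⟨⟨⟨t, ht2.1.le, ht2.2⟩, ht2.1⟩, ?_⟩
    have := projIcc_of_mem zero_le_one (⟨ht2.1.le, ht2.2⟩ : t ∈ Icc (0:ℝ) 1)
    rw [mem_preimage, this] at ht1
    exact ht1
  obtain ⟨T, hT⟩ := isCompact_univ.elim_finite_subcover _
    (fun t : {t : Icc (0:ℝ) 1 // 0 < (t:ℝ)} =>
      isOpen_interior.preimage (hcont.comp (Continuous.prodMk_right t.1))) hcov
  refine ⟨∑ t ∈ T, (n + p (j y0)) / (t.1:ℝ), fun y => ?_⟩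
  obtain ⟨t, htT, ht⟩ := mem_iUnion₂.1 (hT (mem_univ y))
  have htpos := t.2
  have h1 : p (j (h t.1 y)) ≤ n := by
    have : h t.1 y ∈ {y | p (0 - j y) ≤ n} := interior_subset ht
    simpa using this
  have h2 : (t.1:ℝ) • j y = j (h t.1 y) - (1 - (t.1:ℝ)) • j y0 := by rw [hh]; abel
  have h3 : (t.1:ℝ) * p (j y) ≤ n + p (j y0) := by
    have e : p ((t.1:ℝ) • j y) = (t.1:ℝ) * p (j y) := by
      rw [map_smul_eq_mul, Real.norm_of_nonneg t.1.2.1]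
    rw [← e, h2]
    refine (map_sub_le_add p _ _).trans (add_le_add h1 ?_)
    rw [map_smul_eq_mul, Real.norm_of_nonneg (by linarith [t.1.2.2])]
    nlinarith [apply_nonneg p (j y0), t.1.2.1]
  have h4 : p (j y) ≤ (n + p (j y0)) / (t.1:ℝ) := by
    rw [le_div_iff₀ htpos]; linarith
  refine h4.trans (Finset.single_le_sum (f := fun t : {t : Icc (0:ℝ) 1 // 0 < (t:ℝ)} => ((n:ℝ) + p (j y0)) / (t.1:ℝ)) ?_ htT)
  intro i _
  have := apply_nonneg p (j y0)
  have := i.2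
  positivity

lemma aux_measure {S : Type*} [Semigroup S] [TopologicalSpace S]
    (hLIM : HasLIM S (LUCset S))
    {Y : Type*} [TopologicalSpace Y] [CompactSpace Y] [T2Space Y] [Nonempty Y]
    [MeasurableSpace Y] [BorelSpace Y]
    (σ : S → Y → Y) (hσ : Continuous fun q : S × Y => σ q.1 q.2)
    (hact : ∀ s t y, σ (s * t) y = σ s (σ t y)) :
    ∃ m : Measure Y, IsProbabilityMeasure m ∧ m.Regular ∧
      ∀ s, ∀ U, IsOpen U → m U ≤ m (σ s ⁻¹' U) := by
  obtain ⟨μ, hμn, hμ1, hμ⟩ := hLIM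
  obtain ⟨y0⟩ := ‹Nonempty Y›
  have hσy : ∀ y, Continuous fun s => σ s y := fun y => hσ.comp (continuous_id.prodMk continuous_const)
  have hσs : ∀ s, Continuous (σ s) := fun s => hσ.comp (continuous_const.prodMk continuous_id)
  let E : C(Y, ℝ) → (S →ᵇ ℂ) := fun f =>
    BoundedContinuousFunction.ofNormedAddCommGroup (fun s => (f (σ s y0) : ℂ))
      (Complex.continuous_ofReal.comp (f.continuous.comp (hσy y0))) ‖f‖
      (fun s => by simpa using f.norm_coe_le_norm _)
  have hE : ∀ f s, E f s = (f (σ s y0) : ℂ) := fun f s => rfl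
  have hpos : ∀ f : C(Y, ℝ), (∀ y, 0 ≤ f y) → 0 ≤ (μ (E f)).re := by
    intro f hf
    have h1 : ‖(‖f‖ : ℂ) • (1 : S →ᵇ ℂ) - E f‖ ≤ ‖f‖ := by
      rw [BoundedContinuousFunction.norm_le (norm_nonneg _)]
      intro s
      have : ((‖f‖ : ℂ) • (1 : S →ᵇ ℂ) - E f) s = ((‖f‖ - f (σ s y0) : ℝ) : ℂ) := by
        simp [hE]
      rw [this, Complex.norm_real, Real.norm_eq_abs, abs_le]
      have := (le_abs_self _).trans (f.norm_coe_le_norm (σ s y0))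
      constructor <;> linarith [hf (σ s y0)]
    have h2 := μ.le_opNorm ((‖f‖ : ℂ) • (1 : S →ᵇ ℂ) - E f)
    rw [hμn, one_mul, map_sub, map_smul, hμ1] at h2
    have h3 := (Complex.re_le_norm _).trans (h2.trans h1)
    simp at h3
    linarith
  let L : C_c(Y, ℝ) →ₗ[ℝ] ℝ :=
    { toFun := fun f => (μ (E f.toContinuousMap)).re
      map_add' := by
        intro f g
        have : E (f + g).toContinuousMap = E f.toContinuousMap + E g.toContinuousMap := by
          ext s; simp [hE]
        rw [this]; simp
      map_smul' := by
        intro c g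
        have : E (c • g).toContinuousMap = (c : ℂ) • E g.toContinuousMap := by
          ext s; simp [hE]
        rw [this]; simp }
  let Λ : C_c(Y, ℝ) →ₚ[ℝ] ℝ := PositiveLinearMap.mk₀ L (fun f hf => hpos _ (fun y => hf y))
  have hint : ∀ f : C(Y, ℝ), ∫ y, f y ∂(RealRMK.rieszMeasure Λ) = (μ (E f)).re := by
    intro f
    exact RealRMK.integral_rieszMeasure Λ ⟨f, HasCompactSupport.of_compactSpace _⟩
  have hinv : ∀ (f : C(Y, ℝ)) s, μ (E (f.comp ⟨σ s, hσs s⟩)) = μ (E f) := by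
    intro f s
    let G : S → S →ᵇ ℂ := fun s => E (f.comp ⟨σ s, hσs s⟩)
    have hG : IsLTranslates S (E f) G := by
      intro s t; simp [G, hE, hact]
    refine hμ (E f) ⟨G, hG, ?_⟩ G hG s
    have hc : Continuous fun s => f.comp ⟨σ s, hσs s⟩ := by
      apply ContinuousMap.continuous_of_continuous_uncurry
      exact f.continuous.comp hσ
    have hEl : LipschitzWith 1 E := by
      apply LipschitzWith.of_dist_le_mul
      intro a b
      rw [NNReal.coe_one, one_mul, BoundedContinuousFunction.dist_le dist_nonneg]
      intro s
      rw [hE, hE, Complex.dist_of_im_eq (by simp)]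
      simpa using ContinuousMap.dist_apply_le_dist (f := a) (g := b) (σ s y0)
    exact hEl.continuous.comp hc
  refine ⟨RealRMK.rieszMeasure Λ, ?_, inferInstance, ?_⟩
  · have h1 := hint 1
    have : E 1 = 1 := by ext s; simp [hE]
    rw [this, hμ1] at h1
    simp at h1
    constructor
    rw [← ENNReal.toReal_eq_one_iff]
    exact h1
  · intro s U hU
    set m := RealRMK.rieszMeasure Λ
    have hms : Measurable (σ s) := (hσs s).measurable
    have : IsFiniteMeasure (m.map (σ s)) := Measure.isFiniteMeasure_map m (σ s)
    have key := RealRMK.measure_le_of_isCompact_of_integral (μ := m.map (σ s)) (ν := m)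
      (fun f => by
        have hf : Continuous fun y => f y := f.continuous
        rw [integral_map hms.aemeasurable hf.aestronglyMeasurable]
        have a1 := hint (f.toContinuousMap.comp ⟨σ s, hσs s⟩)
        have a2 := hint f.toContinuousMap
        rw [hinv] at a1
        exact (a1.trans a2.symm).le) (hU.isClosed_compl.isCompact)
    rw [Measure.map_apply hms hU.isClosed_compl.measurableSet, preimage_compl,
      measure_compl (hms hU.measurableSet) (measure_ne_top _ _),
      measure_compl hU.measurableSet (measure_ne_top _ _)] at key
    exact (ENNReal.sub_le_sub_iff_left (measure_mono (subset_univ _)) (measure_ne_top _ _)).1 key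

lemma aux_frag_s2 {X Y : Type*} [AddCommGroup X] [Module ℝ X] [TopologicalSpace X]
    [IsTopologicalAddGroup X] [ContinuousSMul ℝ X] [LocallyConvexSpace ℝ X]
    [TopologicalSpace Y] [CompactSpace Y] [T2Space Y] (j : Y → X)
    (hj : ∀ f : X →L[ℝ] ℝ, Continuous fun y => f (j y))
    (hconv : Convex ℝ (range j))
    (p : Seminorm ℝ X) (hp : Continuous p)
    [MeasurableSpace Y] [BorelSpace Y] (m : Measure Y) [IsFiniteMeasure m] [m.Regular]
    (U : Set Y) (hU : IsOpen U) (hmU : 0 < m U) (c : ℝ) (hc : 0 < c)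
    (h0 : ∀ x, m (U ∩ {y | p (j x - j y) ≤ c}) = 0) : False := by
  have step : ∀ (A : Finset Y) (V : Set Y), IsOpen V → 0 < m V → V ⊆ U →
      ∃ (y : Y) (V' : Set Y), IsOpen V' ∧ 0 < m V' ∧ closure V' ⊆ V ∧ y ∈ V' ∧
        ∀ z ∈ convexHull ℝ (j '' A), ∀ w ∈ closure V', c / 2 ≤ p (z - j w) := by
    intro A V hV hmV hVU
    have hcomp : IsCompact (convexHull ℝ (j '' (A : Set Y))) :=
      (A.finite_toSet.image j).isCompact_convexHull ℝ
    have hsub : convexHull ℝ (j '' (A : Set Y)) ⊆ range j :=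
      convexHull_min (image_subset_range _ _) hconv
    obtain ⟨T, hT, hT'⟩ := hcomp.elim_nhds_subcover (fun x => {z | p (x - z) < c / 2})
      (fun x _ => (isOpen_lt (hp.comp (continuous_const.sub continuous_id))
        continuous_const).mem_nhds (by simpa using half_pos hc))
    let B : Set Y := ⋃ x ∈ T, {y | p (x - j y) ≤ c}
    have hB : IsClosed B := T.finite_toSet.isClosed_biUnion
      (fun x _ => aux_isClosed_ball j hj p hp x c)
    have hnull : m (V ∩ B) = 0 := by
      rw [inter_iUnion₂]
      refine (measure_biUnion_null_iff T.countable_toSet).2 ?_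
      intro x hx
      obtain ⟨y, rfl⟩ := hsub (hT x hx)
      exact measure_mono_null (inter_subset_inter_left _ hVU) (h0 y)
    have hW : 0 < m (V \ B) := by
      have := measure_inter_add_sdiff (μ := m) V hB.measurableSet
      rw [hnull, zero_add] at this
      rwa [this]
    obtain ⟨C, hCW, hC, hmC⟩ := (hV.sdiff hB).exists_lt_isCompact hW
    obtain ⟨V', hV', hCV', hV'W⟩ := normal_exists_closure_subset hC.isClosed (hV.sdiff hB) hCW
    have hm' : 0 < m V' := hmC.trans_le (measure_mono hCV')
    obtain ⟨y, hy⟩ := nonempty_of_measure_ne_zero hm'.ne'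
    refine ⟨y, V', hV', hm', fun w hw => (hV'W hw).1, hy, ?_⟩
    intro z hz w hw
    obtain ⟨x, hx, hxz⟩ := mem_iUnion₂.1 (hT' hz)
    have hnb : ¬ p (x - j w) ≤ c := fun h => (hV'W hw).2 (mem_iUnion₂.2 ⟨x, hx, h⟩)
    have htri : p (x - j w) ≤ p (x - z) + p (z - j w) := by
      have := map_add_le_add p (x - z) (z - j w)
      simpa using this
    have : p (x - z) < c / 2 := hxz
    push Not at hnb
    linarith
  obtain ⟨y00, -⟩ := nonempty_of_measure_ne_zero hmU.ne'
  have : Nonempty Y := ⟨y00⟩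
  choose! ny nV n1 n2 n3 n4 n5 using step
  classical
  -- states
  let St := {q : Finset Y × Set Y // IsOpen q.2 ∧ 0 < m q.2 ∧ q.2 ⊆ U}
  let nxt : St → St := fun q =>
    ⟨(insert (ny q.1.1 q.1.2) q.1.1, nV q.1.1 q.1.2),
      n1 _ _ q.2.1 q.2.2.1 q.2.2.2, n2 _ _ q.2.1 q.2.2.1 q.2.2.2,
      (subset_closure.trans (n3 _ _ q.2.1 q.2.2.1 q.2.2.2)).trans q.2.2.2⟩
  let st : ℕ → St := fun n => nxt^[n] ⟨(∅, U), hU, hmU, subset_rfl⟩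
  have hst : ∀ n, st (n + 1) = nxt (st n) := fun n => Function.iterate_succ_apply' _ _ _
  let y : ℕ → Y := fun n => ny (st n).1.1 (st n).1.2
  have hVanti : Antitone fun n => (st n).1.2 := by
    apply antitone_nat_of_succ_le
    intro n
    rw [hst]
    exact subset_closure.trans (n3 _ _ (st n).2.1 (st n).2.2.1 (st n).2.2.2)
  have hAmono : Monotone fun n => (st n).1.1 := by
    apply monotone_nat_of_le_succ
    intro n
    rw [hst]
    exact Finset.subset_insert _ _
  have hyA : ∀ n, y n ∈ (st (n + 1)).1.1 := by
    intro n; rw [hst]; exact Finset.mem_insert_self _ _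
  have hyV : ∀ n, y n ∈ (st (n + 1)).1.2 := by
    intro n; rw [hst]; exact n4 _ _ (st n).2.1 (st n).2.2.1 (st n).2.2.2
  have hdist : ∀ n, ∀ z ∈ convexHull ℝ (j '' ((st n).1.1 : Set Y)),
      ∀ w ∈ closure (st (n + 1)).1.2, c / 2 ≤ p (z - j w) := by
    intro n; rw [hst]; exact n5 _ _ (st n).2.1 (st n).2.2.1 (st n).2.2.2
  -- cluster point
  obtain ⟨w, -, hw⟩ := isCompact_univ (X := Y) (f := map y atTop) (by simp)
  have hmem : ∀ F : Set Y, IsClosed F → ∀ n, (∀ k, n ≤ k → y k ∈ F) → w ∈ F := by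
    intro F hF n hk
    have h1 : F ∈ map y atTop := mem_map.2 (mem_atTop_sets.2 ⟨n, hk⟩)
    exact hF.closure_eq ▸ (mem_closure_iff_clusterPt.2 (hw.mono (le_principal_iff.2 h1)))
  have hwcl : ∀ n, w ∈ closure (st (n + 1)).1.2 := by
    intro n
    exact hmem _ isClosed_closure n fun k hk => subset_closure (hVanti (Nat.succ_le_succ hk) (hyV k))
  let D : Set X := ⋃ n, convexHull ℝ (j '' ((st n).1.1 : Set Y))
  have hD : Convex ℝ D := by
    apply Directed.convex_iUnion
    · apply Monotone.directed_le
      intro a b hab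
      exact convexHull_mono (image_mono (by exact_mod_cast hAmono hab))
    · intro n; exact convex_convexHull _ _
  have hwD : j w ∈ closure D := by
    have hcl := aux_isClosed_preimage j hj hD.closure isClosed_closure
    exact hmem _ hcl 0 fun k _ => subset_closure
      (mem_iUnion.2 ⟨k + 1, subset_convexHull ℝ _ ⟨y k, hyA k, rfl⟩⟩)
  obtain ⟨z, hz, hzD⟩ := mem_closure_iff_nhds.1 hwD {z | p (z - j w) < c / 2}
    ((isOpen_lt (hp.comp (continuous_id.sub continuous_const))
        continuous_const).mem_nhds (by simpa using half_pos hc))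
  obtain ⟨n, hn⟩ := mem_iUnion.1 hzD
  exact absurd (hdist n z hn w (hwcl n)) (not_le.2 hz)

lemma aux_main_s2 {S : Type*} [Semigroup S] [TopologicalSpace S]
    (hLIM : HasLIM S (LUCset S))
    {X Y : Type*} [AddCommGroup X] [Module ℝ X] [TopologicalSpace X]
    [IsTopologicalAddGroup X] [ContinuousSMul ℝ X] [LocallyConvexSpace ℝ X]
    [TopologicalSpace Y] [CompactSpace Y] [T2Space Y] [Nonempty Y] (j : Y → X)
    (hj : IsInducing fun (y : Y) (f : X →L[ℝ] ℝ) => f (j y))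
    (hconv : Convex ℝ (range j))
    (p : Seminorm ℝ X) (hp : Continuous p)
    (σ : S → Y → Y) (hσ : Continuous fun q : S × Y => σ q.1 q.2)
    (hact : ∀ s t y, σ (s * t) y = σ s (σ t y))
    (hne : ∀ s x y, p (j (σ s x) - j (σ s y)) ≤ p (j x - j y))
    (hmin : ∀ C : Set Y, IsClosed C → C.Nonempty → Convex ℝ (j '' C) →
      (∀ s, ∀ y ∈ C, σ s y ∈ C) → C = univ) (x1 x2 : Y) : p (j x1 - j x2) = 0 := by
  have hj' : ∀ f : X →L[ℝ] ℝ, Continuous fun y => f (j y) := fun f =>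
    (continuous_apply f).comp hj.continuous
  let _ : MeasurableSpace Y := borel Y
  have : BorelSpace Y := ⟨rfl⟩
  obtain ⟨m, hm1, hm2, hm3⟩ := aux_measure hLIM σ hσ hact
  obtain ⟨R, hR⟩ := aux_bounded j hj hconv p hp
  have hσs : ∀ s, Continuous (σ s) := fun s => hσ.comp (continuous_const.prodMk continuous_id)
  have hmeas : ∀ x, Measurable fun y => p (x - j y) := fun x =>
    measurable_of_Iic fun r => (aux_isClosed_ball j hj' p hp x r).measurableSet
  have hbd : ∀ x y, p (x - j y) ≤ p x + R := fun x y =>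
    (map_sub_le_add p _ _).trans (by linarith [hR y])
  have hnn : ∀ z, 0 ≤ p z := fun z => apply_nonneg p z
  have hint : ∀ x x', Integrable (fun y => p (x - j y) * p (x' - j y)) m := by
    intro x x'
    refine Integrable.of_bound ((hmeas x).mul (hmeas x')).aestronglyMeasurable
      ((p x + R) * (p x' + R)) (ae_of_all _ fun y => ?_)
    rw [Real.norm_of_nonneg (mul_nonneg (hnn _) (hnn _))]
    exact mul_le_mul (hbd x y) (hbd x' y) (hnn _) ((hnn _).trans (hbd x y))
  let Ψ : X → ℝ := fun x => ∫ y, p (x - j y) * p (x - j y) ∂m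
  -- invariance
  have hinv : ∀ s x, Ψ (j (σ s x)) ≤ Ψ (j x) := by
    intro s x
    have hm' : Measurable fun y => p (j (σ s x) - j y) * p (j (σ s x) - j y) :=
      (hmeas _).mul (hmeas _)
    have e1 : ∫⁻ y, ENNReal.ofReal (p (j (σ s x) - j y) * p (j (σ s x) - j y)) ∂m
        ≤ ∫⁻ y, ENNReal.ofReal (p (j (σ s x) - j (σ s y)) * p (j (σ s x) - j (σ s y))) ∂m := by
      rw [lintegral_eq_lintegral_meas_lt m (ae_of_all _ fun y => mul_self_nonneg _)
          hm'.aemeasurable,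
        lintegral_eq_lintegral_meas_lt m (ae_of_all _ fun y => mul_self_nonneg _)
          (hm'.comp (hσs s).measurable).aemeasurable]
      refine setLIntegral_mono' measurableSet_Ioi fun t ht => ?_
      have hopen : IsOpen {a | t < p (j (σ s x) - j a) * p (j (σ s x) - j a)} := by
        have : {a | t < p (j (σ s x) - j a) * p (j (σ s x) - j a)}
            = {a | p (j (σ s x) - j a) ≤ √t}ᶜ := by
          ext a
          simp only [mem_ofPred_eq, mem_compl_iff, not_le]
          rw [Real.sqrt_lt (le_of_lt ht) (hnn _), sq]
        rw [this]
        exact (aux_isClosed_ball j hj' p hp _ _).isOpen_compl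
      exact hm3 s _ hopen
    have e2 : ∫⁻ y, ENNReal.ofReal (p (j (σ s x) - j y) * p (j (σ s x) - j y)) ∂m
        ≤ ∫⁻ y, ENNReal.ofReal (p (j x - j y) * p (j x - j y)) ∂m :=
      e1.trans (lintegral_mono fun y => ENNReal.ofReal_le_ofReal
        (mul_self_le_mul_self (hnn _) (hne s x y)))
    rw [← ofReal_integral_eq_lintegral_ofReal (hint _ _) (ae_of_all _ fun y => mul_self_nonneg _),
      ← ofReal_integral_eq_lintegral_ofReal (hint _ _) (ae_of_all _ fun y => mul_self_nonneg _)] at e2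
    exact (ENNReal.ofReal_le_ofReal_iff (integral_nonneg fun y => mul_self_nonneg _)).1 e2
  -- continuity
  have hlip : ∀ x z, Ψ z ≤ Ψ x + p (z - x) * (2 * (p x + R) + p (z - x)) := by
    intro x z
    have h1 : ∀ y, p (z - j y) * p (z - j y) ≤ p (x - j y) * p (x - j y)
        + p (z - x) * (2 * (p x + R) + p (z - x)) := by
      intro y
      have a : p (z - j y) ≤ p (z - x) + p (x - j y) := by
        simpa using map_add_le_add p (z - x) (x - j y)
      nlinarith [hbd x y, hnn (z - x), hnn (x - j y), hnn (z - j y), mul_self_le_mul_self (hnn _) a,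
        mul_le_mul_of_nonneg_left (hbd x y) (hnn (z - x))]
    calc Ψ z ≤ ∫ y, (p (x - j y) * p (x - j y)
        + p (z - x) * (2 * (p x + R) + p (z - x))) ∂m :=
          integral_mono (hint z z) ((hint x x).add (integrable_const _)) h1
      _ = _ := by rw [integral_add (hint x x) (integrable_const _)]; simp [Ψ]
  have hclosed : ∀ a, IsClosed {z | Ψ z ≤ a} := by
    intro a
    rw [← closure_subset_iff_isClosed]
    intro x hx
    have hcont : Continuous fun z => a + p (x - z) * (2 * (p z + R) + p (x - z)) := by
      have := hp.comp (continuous_const.sub continuous_id : Continuous fun z => x - z)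
      simp only [Function.comp_def] at this
      fun_prop
    have : closure {z | Ψ z ≤ a} ⊆ {z | Ψ x ≤ a + p (x - z) * (2 * (p z + R) + p (x - z))} :=
      closure_minimal (fun z hz => (hlip z x).trans (by
        have : Ψ z ≤ a := hz
        linarith)) (isClosed_le continuous_const hcont)
    have := this hx
    simpa using this
  have hconvex : ∀ a, Convex ℝ {z | Ψ z ≤ a} := by
    intro a x hx z hz s t hs ht hst
    have hx' : Ψ x ≤ a := hx
    have hz' : Ψ z ≤ a := hz
    have h1 : ∀ y, p (s • x + t • z - j y) * p (s • x + t • z - j y) ≤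
        s * (p (x - j y) * p (x - j y)) + t * (p (z - j y) * p (z - j y)) := by
      intro y
      have e : s • x + t • z - j y = s • (x - j y) + t • (z - j y) := by
        rw [smul_sub, smul_sub]
        have : j y = s • j y + t • j y := by rw [← add_smul, hst, one_smul]
        nth_rewrite 1 [this]; abel
      have b : p (s • x + t • z - j y) ≤ s * p (x - j y) + t * p (z - j y) := by
        rw [e]
        refine (map_add_le_add p _ _).trans ?_
        rw [map_smul_eq_mul, map_smul_eq_mul, Real.norm_of_nonneg hs, Real.norm_of_nonneg ht]
      have c := mul_self_le_mul_self (hnn _) b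
      have ht' : t = 1 - s := by linarith
      subst ht'
      nlinarith [mul_nonneg (mul_nonneg hs ht) (sq_nonneg (p (x - j y) - p (z - j y)))]
    have h2 : Ψ (s • x + t • z) ≤ s * Ψ x + t * Ψ z := by
      calc Ψ (s • x + t • z) ≤ ∫ y, (s * (p (x - j y) * p (x - j y))
            + t * (p (z - j y) * p (z - j y))) ∂m :=
            integral_mono (hint _ _) (((hint x x).const_mul s).add ((hint z z).const_mul t)) h1
        _ = _ := by
          rw [integral_add ((hint x x).const_mul s) ((hint z z).const_mul t),
            integral_const_mul, integral_const_mul]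
    change Ψ (s • x + t • z) ≤ a
    have ht' : t = 1 - s := by linarith
    subst ht'
    nlinarith
  have hle : ∀ x z, Ψ (j z) ≤ Ψ (j x) := by
    intro x z
    have := hmin (j ⁻¹' {z | Ψ z ≤ Ψ (j x)})
      (aux_isClosed_preimage j hj' (hconvex _) (hclosed _)) ⟨x, le_refl (Ψ (j x))⟩
      (by
        rw [image_preimage_eq_inter_range]
        exact (hconvex _).inter hconv)
      (fun s y hy => (hinv s y).trans hy)
    have hz : z ∈ j ⁻¹' {z | Ψ z ≤ Ψ (j x)} := this ▸ mem_univ z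
    exact hz
  -- equality almost everywhere
  have hae : ∀ x z, ∀ᵐ y ∂m, p (j x - j y) = p (j z - j y) := by
    intro x z
    obtain ⟨w, hw⟩ : ∃ w, j w = (1/2 : ℝ) • j x + (1/2 : ℝ) • j z :=
      hconv (mem_range_self x) (mem_range_self z) (by norm_num) (by norm_num) (by norm_num)
    have hI : Integrable (fun y => (p (j x - j y) - p (j z - j y)) * (p (j x - j y) - p (j z - j y))) m := by
      refine (((hint (j x) (j x)).sub ((hint (j x) (j z)).const_mul 2)).add
        (hint (j z) (j z))).congr (ae_of_all _ fun y => ?_)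
      simp only [Pi.add_apply, Pi.sub_apply]; ring
    have h1 : ∀ y, (p (j x - j y) - p (j z - j y)) * (p (j x - j y) - p (j z - j y)) ≤
        (2 * (p (j x - j y) * p (j x - j y)) + 2 * (p (j z - j y) * p (j z - j y)))
          - 4 * (p (j w - j y) * p (j w - j y)) := by
      intro y
      have e : j w - j y = (1/2 : ℝ) • (j x - j y) + (1/2 : ℝ) • (j z - j y) := by
        rw [hw, smul_sub, smul_sub]
        have : j y = (1/2 : ℝ) • j y + (1/2 : ℝ) • j y := by rw [← add_smul]; norm_num
        nth_rewrite 1 [this]; abel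
      have b : p (j w - j y) ≤ (1/2) * p (j x - j y) + (1/2) * p (j z - j y) := by
        rw [e]
        refine (map_add_le_add p _ _).trans ?_
        rw [map_smul_eq_mul, map_smul_eq_mul, Real.norm_of_nonneg (by norm_num)]
      nlinarith [mul_self_le_mul_self (hnn _) b]
    have i1 := (hint (j x) (j x)).const_mul 2
    have i2 := (hint (j z) (j z)).const_mul 2
    have i12 : Integrable (fun y => 2 * (p (j x - j y) * p (j x - j y))
        + 2 * (p (j z - j y) * p (j z - j y))) m := i1.add i2
    have i3 := (hint (j w) (j w)).const_mul 4
    have h2 := integral_mono hI (i12.sub i3) h1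
    have h3 : ∫ y, ((2 * (p (j x - j y) * p (j x - j y)) + 2 * (p (j z - j y) * p (j z - j y)))
          - 4 * (p (j w - j y) * p (j w - j y))) ∂m = 2 * Ψ (j x) + 2 * Ψ (j z) - 4 * Ψ (j w) := by
      rw [integral_sub i12 i3, integral_add i1 i2, integral_const_mul,
        integral_const_mul, integral_const_mul]
    have h4 : ∫ y, (p (j x - j y) - p (j z - j y)) * (p (j x - j y) - p (j z - j y)) ∂m = 0 := by
      refine le_antisymm ?_ (integral_nonneg fun y => mul_self_nonneg _)
      refine h2.trans (h3.le.trans ?_)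
      linarith [hle w x, hle w z]
    have h5 := (integral_eq_zero_iff_of_nonneg (fun y => mul_self_nonneg _) hI).1 h4
    filter_upwards [h5] with y hy
    have : p (j x - j y) - p (j z - j y) = 0 := mul_self_eq_zero.1 hy
    linarith
  by_contra hne0
  have hpos : 0 < p (j x1 - j x2) := lt_of_le_of_ne (hnn _) (Ne.symm hne0)
  set c := p (j x1 - j x2) / 3 with hc
  have hcl := aux_isClosed_ball j hj' p hp (j x1) c
  refine aux_frag_s2 j hj' hconv p hp m {y | p (j x1 - j y) ≤ c}ᶜ hcl.isOpen_compl ?_ c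
    (by positivity) ?_
  · rw [pos_iff_ne_zero]
    intro h0
    have h1 : ∀ᵐ y ∂m, p (j x1 - j y) ≤ c := h0
    obtain ⟨y, hy1, hy2⟩ := (h1.and (hae x1 x2)).exists
    have : p (j x1 - j x2) ≤ p (j x1 - j y) + p (j x2 - j y) := by
      rw [map_sub_rev p (j x2)]
      simpa using map_add_le_add p (j x1 - j y) (j y - j x2)
    linarith
  · intro x
    have : ∀ᵐ y ∂m, y ∉ {y | p (j x1 - j y) ≤ c}ᶜ ∩ {y | p (j x - j y) ≤ c} := by
      filter_upwards [hae x1 x] with y hy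
      rintro ⟨h1, h2⟩
      apply h1
      rw [mem_ofPred_eq, hy]; exact h2
    simpa using measure_eq_zero_iff_ae_notMem.2 this

lemma aux_zorn_s2 {X S : Type*} [AddCommGroup X] [Module ℝ X] [TopologicalSpace X] [T2Space X]
    (K : Set X) (π : S → X → X) (hne : K.Nonempty) (hc : Convex ℝ K) (hK : IsCompact K)
    (hπ : ∀ s, MapsTo (π s) K K) :
    ∃ K' ⊆ K, K'.Nonempty ∧ Convex ℝ K' ∧ IsCompact K' ∧ (∀ s, MapsTo (π s) K' K') ∧
      ∀ C ⊆ K', C.Nonempty → Convex ℝ C → IsCompact C → (∀ s, MapsTo (π s) C C) → C = K' := by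
  let F : Set (Set X) := {C | C ⊆ K ∧ C.Nonempty ∧ Convex ℝ C ∧ IsCompact C ∧
    ∀ s, MapsTo (π s) C C}
  obtain ⟨K', hK'⟩ := zorn_superset F (by
    intro c hcF hch
    rcases c.eq_empty_or_nonempty with rfl | hcne
    · exact ⟨K, ⟨subset_rfl, hne, hc, hK, hπ⟩, by simp⟩
    · obtain ⟨C0, hC0⟩ := hcne
      have : Nonempty c := ⟨⟨C0, hC0⟩⟩
      refine ⟨⋂₀ c, ⟨(sInter_subset_of_mem hC0).trans (hcF hC0).1, ?_, ?_, ?_, ?_⟩,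
        fun s hs => sInter_subset_of_mem hs⟩
      · rw [sInter_eq_iInter]
        refine IsCompact.nonempty_iInter_of_directed_nonempty_isCompact_isClosed _ ?_
          (fun i => (hcF i.2).2.1) (fun i => (hcF i.2).2.2.2.1)
          (fun i => (hcF i.2).2.2.2.1.isClosed)
        intro a b
        rcases hch.total a.2 b.2 with h | h
        · exact ⟨a, subset_rfl, h⟩
        · exact ⟨b, h, subset_rfl⟩
      · exact convex_sInter fun C hC => (hcF hC).2.2.1
      · exact (hcF hC0).2.2.2.1.of_isClosed_subset
          (isClosed_sInter fun C hC => (hcF hC).2.2.2.1.isClosed) (sInter_subset_of_mem hC0)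
      · intro s x hx C hC
        exact (hcF hC).2.2.2.2 s (hx C hC))
  obtain ⟨h1, h2, h3, h4, h5⟩ := hK'.prop
  refine ⟨K', h1, h2, h3, h4, h5, ?_⟩
  intro C hC c1 c2 c3 c4
  exact hC.antisymm (hK'.le_of_le ⟨hC.trans h1, c1, c2, c3, c4⟩ hC)

lemma aux_all {S : Type*} [Semigroup S] [TopologicalSpace S]
    (hLIM : HasLIM S (LUCset S))
    {X W : Type*} [AddCommGroup X] [Module ℝ X] [TopologicalSpace X] [T2Space X]
    [AddCommGroup W] [Module ℝ W] [TopologicalSpace W] (e : W ≃ₗ[ℝ] X)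
    (he : IsInducing fun (w : W) (f : X →L[ℝ] ℝ) => f (e w))
    {ι : Type*} [Nonempty ι] (Q : SeminormFamily ℝ X ι) (hQ : WithSeminorms Q)
    (K : Set W) (π : S → W → W) (hne : K.Nonempty) (hc : Convex ℝ K) (hK : IsCompact K)
    (hπ : ∀ s, MapsTo (π s) K K)
    (hact : ∀ s t : S, ∀ x ∈ K, π (s * t) x = π s (π t x))
    (hcont : ContinuousOn (fun q : S × W => π q.1 q.2) (univ ×ˢ K))
    (hnonexp : ∀ (i : ι) (s : S), ∀ x ∈ K, ∀ y ∈ K,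
      Q i (e (π s x) - e (π s y)) ≤ Q i (e x - e y)) :
    ∃ x ∈ K, ∀ s : S, π s x = x := by
  have := hQ.topologicalAddGroup
  have := hQ.continuousSMul
  have := hQ.toLocallyConvexSpace
  have hT2 : T2Space W := by
    refine T2Space.of_injective_continuous ?_ he.continuous
    intro a b hab
    by_contra hne
    obtain ⟨f, hf⟩ := geometric_hahn_banach_point_point (E := X) (x := e a) (y := e b)
      (fun h => hne (e.injective h))
    exact hf.ne (congrFun hab f)
  obtain ⟨K', hKK, h2, h3, h4, h5, h6⟩ := aux_zorn_s2 K π hne hc hK hπ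
  let σ : S → K' → K' := fun s y => ⟨π s y, h5 s y.2⟩
  have hσ : Continuous fun q : S × K' => σ q.1 q.2 := by
    refine Continuous.subtype_mk ?_ _
    exact hcont.comp_continuous (continuous_fst.prodMk (continuous_subtype_val.comp continuous_snd))
      (fun q => ⟨mem_univ _, hKK q.2.2⟩)
  have : CompactSpace K' := isCompact_iff_compactSpace.1 h4
  have : Nonempty K' := h2.to_subtype
  have hind : IsInducing fun (y : K') (f : X →L[ℝ] ℝ) => f (e y) :=
    he.comp IsInducing.subtypeVal
  have hrange : range (fun y : K' => e y) = e '' K' := by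
    ext z; simp
  have key : ∀ i (x1 x2 : K'), Q i (e x1 - e x2) = 0 := by
    intro i x1 x2
    refine aux_main_s2 hLIM (fun y : K' => e y) hind ?_ (Q i) (hQ.continuous_seminorm i) σ hσ
      (fun s t y => Subtype.ext (hact s t y (hKK y.2)))
      (fun s x y => hnonexp i s x (hKK x.2) y (hKK y.2)) ?_ x1 x2
    · rw [hrange]; exact h3.linear_image e.toLinearMap
    · intro C hC hCne hCc hCi
      have himg : Convex ℝ (Subtype.val '' C : Set W) := by
        have h := hCc.linear_image e.symm.toLinearMap
        have e2 : e.symm.toLinearMap '' ((fun y : K' => e y) '' C) = Subtype.val '' C := by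
          rw [image_image]; simp
        rwa [e2] at h
      have := h6 (Subtype.val '' C) (by rintro _ ⟨y, -, rfl⟩; exact y.2) (hCne.image _) himg
        (hC.isCompact.image continuous_subtype_val)
        (by
          rintro s _ ⟨y, hy, rfl⟩
          exact ⟨σ s y, hCi s y hy, rfl⟩)
      refine eq_univ_of_forall fun y => ?_
      have hy : (y : W) ∈ Subtype.val '' C := by rw [this]; exact y.2
      obtain ⟨z, hz, hzy⟩ := hy
      rwa [← Subtype.ext hzy]
  obtain ⟨x, hx⟩ := h2
  refine ⟨x, hKK hx, fun s => ?_⟩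
  by_contra hne'
  have hsub : e (π s x) - e x ≠ 0 := fun h => hne' (e.injective (sub_eq_zero.1 h))
  obtain ⟨i, hi⟩ := hQ.separating_of_T1 _ hsub
  exact hi (key i ⟨π s x, h5 s hx⟩ ⟨x, hx⟩)

lemma aux_weakTop (X : Type*) [AddCommGroup X] [Module ℝ X] [TopologicalSpace X] :
    @IsInducing X ((X →L[ℝ] ℝ) → ℝ) (weakTop ℝ X) _
      (fun (w : X) (f : X →L[ℝ] ℝ) => f (LinearEquiv.refl ℝ X w)) := by
  refine @IsInducing.mk _ _ (weakTop ℝ X) _ _ ?_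
  simp only [weakTop, Pi.topologicalSpace, induced_iInf, induced_compose]
  rfl

end Aux

/-- **Theorem (LUC)**: if `LUC(S)` has a left invariant mean, then `S` has property (G*). -/
theorem propertyGStar_of_LUC_hasLIM
    {S : Type u} [Semigroup S] [TopologicalSpace S] [T2Space S]
    (hS : IsSemitopologicalSemigroup S)
    (hLIM : HasLIM S (LUCset S)) :
    PropertyGStar.{u, v} S := by
  intro X _ _ _ _ ι _ Q hQ K π h1 h2 h3 h4 h5 h6 h7
  exact @aux_all S _ _ hLIM X X _ _ _ _ _ _ (weakTop ℝ X) (LinearEquiv.refl ℝ X)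
    (aux_weakTop X) ι _ Q hQ K π h1 h2 h3 h4 h5 h6 h7
end
end

section
/- Let S be a semitopological semigroup. If LMC(S) has a left invariant mean, then S has property (G): every Q-nonexpansive dynamical system (S,(K,weak)), where K is a weakly compact convex subset of a Hausdorff locally convex space whose topology is determined by a family Q of seminorms, has a point x ∈ K with sx = x for all s ∈ S. -/
open Set MeasureTheory BoundedContinuousFunction

noncomputable section

universe u v

/-- Property (G): every `Q`-nonexpansive dynamical system `(S,(K,weak))` on a nonempty weakly
compact convex subset of a Hausdorff locally convex space has a common fixed point. -/
def PropertyG (S : Type u) [Semigroup S] [TopologicalSpace S] : Prop :=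
  ∀ (X : Type v) [AddCommGroup X] [Module ℝ X] [TopologicalSpace X] [T2Space X]
    (ι : Type v) [Nonempty ι] (Q : SeminormFamily ℝ X ι), WithSeminorms Q →
    ∀ (K : Set X) (π : S → X → X),
      K.Nonempty → Convex ℝ K → @IsCompact X (weakTop ℝ X) K →
      (∀ s : S, MapsTo (π s) K K) →
      (∀ s t : S, ∀ x ∈ K, π (s * t) x = π s (π t x)) →
      -- the action is separately continuous when `K` carries the weak topology
      (∀ x ∈ K, @Continuous S X _ (weakTop ℝ X) fun s => π s x) →
      (∀ s : S, @ContinuousOn X X (weakTop ℝ X) (weakTop ℝ X) (π s) K) →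
      -- the action is `Q`-nonexpansive
      (∀ (i : ι) (s : S), ∀ x ∈ K, ∀ y ∈ K, Q i (π s x - π s y) ≤ Q i (x - y)) →
      ∃ x ∈ K, ∀ s : S, π s x = x

theorem lmcAux_measure {S : Type u} [Semigroup S] [TopologicalSpace S]
    (hLIM : HasLIM S (LMCset S))
    {Z : Type v} [TopologicalSpace Z] [CompactSpace Z] [T2Space Z] [MeasurableSpace Z]
    [BorelSpace Z] (z0 : Z) (a : S → Z → Z)
    (ha : ∀ s t z, a (s * t) z = a s (a t z))
    (hc1 : ∀ z, Continuous fun s => a s z) (hc2 : ∀ s, Continuous (a s)) :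
    ∃ m : Measure Z, IsProbabilityMeasure m ∧ m.Regular ∧ ∀ s, m.map (a s) = m := by
  obtain ⟨μ, hμn, hμ1, hμ⟩ := hLIM
  -- the orbit functions
  let orb : C(Z, ℂ) → (S →ᵇ ℂ) := fun h =>
    (BoundedContinuousFunction.mkOfCompact h).compContinuous ⟨fun s => a s z0, hc1 z0⟩
  have orb_apply : ∀ h s, orb h s = h (a s z0) := fun h s => rfl
  have hinv : ∀ (h : C(Z, ℂ)) (s : S), μ (orb (h.comp ⟨a s, hc2 s⟩)) = μ (orb h) := by
    intro h s
    let g : S → S →ᵇ ℂ := fun s => orb (h.comp ⟨a s, hc2 s⟩)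
    have hg : IsLTranslates S (orb h) g := by
      intro s t
      simp [g, orb_apply, ha]
    refine hμ (orb h) ⟨g, hg, ?_⟩ g hg s
    unfold lmcTop
    rw [continuous_iInf_rng]
    rintro ⟨ν, hνn, hν1, hν⟩
    rw [continuous_induced_rng]
    let χ : C(Z, ℂ) →ₐ[ℂ] ℂ := AlgHom.ofLinearMap
      { toFun := fun k => ν (orb k)
        map_add' := fun k l => by rw [← map_add]; rfl
        map_smul' := fun c k => by rw [← map_smul]; rfl }
      (by
        show ν (orb 1) = 1
        rw [← hν1]; rfl)
      (by
        intro k l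
        show ν (orb (k * l)) = ν (orb k) * ν (orb l)
        rw [← hν]; rfl)
    obtain ⟨z, hz⟩ := (WeakDual.CharacterSpace.continuousMapEval_bijective Z ℂ).2
      (WeakDual.CharacterSpace.equivAlgHom.symm χ)
    have hz' : ∀ k : C(Z, ℂ), ν (orb k) = k z := by
      intro k
      have := congrArg (fun φ : WeakDual.characterSpace ℂ C(Z, ℂ) => φ k) hz
      exact this.symm
    have : (⇑ν ∘ g) = fun s => h (a s z) := by
      funext s
      show ν (orb _) = _
      rw [hz']; rfl
    show Continuous (⇑ν ∘ g)
    rw [this]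
    exact h.continuous.comp (hc1 z)
  -- real part
  let cpx : C(Z, ℝ) → C(Z, ℂ) := fun h => ⟨fun z => (h z : ℂ), by fun_prop⟩
  have hpos : ∀ h : C(Z, ℝ), (∀ z, 0 ≤ h z) → 0 ≤ (μ (orb (cpx h))).re := by
    intro h hh
    have h1 : ‖(‖h‖ : ℂ) • (1 : S →ᵇ ℂ) - orb (cpx h)‖ ≤ ‖h‖ := by
      rw [BoundedContinuousFunction.norm_le (norm_nonneg _)]
      intro s
      have : ((‖h‖ : ℂ) • (1 : S →ᵇ ℂ) - orb (cpx h)) s = ((‖h‖ - h (a s z0) : ℝ) : ℂ) := by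
        simp [orb_apply, cpx]
      rw [this, Complex.norm_real, Real.norm_eq_abs, abs_le]
      have h2 := h.norm_coe_le_norm (a s z0)
      rw [Real.norm_eq_abs] at h2
      have h3 := le_abs_self (h (a s z0))
      have h4 := hh (a s z0)
      have := norm_nonneg h
      constructor <;> linarith
    have h2 := μ.le_opNorm ((‖h‖ : ℂ) • (1 : S →ᵇ ℂ) - orb (cpx h))
    rw [hμn, one_mul, map_sub, map_smul, hμ1] at h2
    have h3 := (Complex.re_le_norm _).trans (h2.trans h1)
    simp at h3
    exact h3
  let Λ : CompactlySupportedContinuousMap Z ℝ →ₚ[ℝ] ℝ := PositiveLinearMap.mk₀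
    { toFun := fun h => (μ (orb (cpx h.toContinuousMap))).re
      map_add' := fun k l => by
        rw [← Complex.add_re, ← map_add]
        congr 2
        ext s
        simp [orb_apply, cpx]
      map_smul' := fun c k => by
        have : orb (cpx (c • k).toContinuousMap) = (c : ℂ) • orb (cpx k.toContinuousMap) := by
          ext s
          simp [orb_apply, cpx]
        rw [this, map_smul]
        simp }
    (fun h hh => hpos _ hh)
  have hΛ : ∀ h : CompactlySupportedContinuousMap Z ℝ,
      ∫ z, h z ∂(RealRMK.rieszMeasure Λ) = (μ (orb (cpx h.toContinuousMap))).re :=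
    fun h => RealRMK.integral_rieszMeasure Λ h
  refine ⟨RealRMK.rieszMeasure Λ, ?_, inferInstance, ?_⟩
  · have h1 := hΛ ⟨1, HasCompactSupport.of_compactSpace 1⟩
    have h2 : orb (cpx (1 : C(Z, ℝ))) = 1 := by
      ext s
      simp [orb_apply, cpx]
    change ∫ z, (1 : ℝ) ∂(RealRMK.rieszMeasure Λ) = (μ (orb (cpx 1))).re at h1
    rw [h2, hμ1] at h1
    simp [Measure.real] at h1
    constructor
    rwa [ENNReal.toReal_eq_one_iff] at h1
  · intro s
    have : (RealRMK.rieszMeasure Λ).InnerRegularCompactLTTop := inferInstance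
    have : ((RealRMK.rieszMeasure Λ).map (a s)).InnerRegularCompactLTTop :=
      Measure.InnerRegularCompactLTTop.map_of_continuous (hc2 s)
    have : IsFiniteMeasure ((RealRMK.rieszMeasure Λ).map (a s)) := inferInstance
    apply Measure.ext_of_integral_eq_on_compactlySupported
    intro h
    rw [integral_map (hc2 s).aemeasurable (map_continuous h).aestronglyMeasurable]
    have h1 := hΛ ⟨h.toContinuousMap.comp ⟨a s, hc2 s⟩, HasCompactSupport.of_compactSpace _⟩
    change ∫ z, h (a s z) ∂(RealRMK.rieszMeasure Λ) = _ at h1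
    rw [h1, hΛ, ← hinv (cpx h.toContinuousMap) s]
    rfl

theorem lmcAux_mazur {X : Type v} [AddCommGroup X] [Module ℝ X] [TopologicalSpace X]
    [IsTopologicalAddGroup X] [ContinuousSMul ℝ X] [LocallyConvexSpace ℝ X]
    {C : Set X} (hC : Convex ℝ C) (hC' : IsClosed C) : @IsClosed X (weakTop ℝ X) C := by
  refine @IsClosed.mk X (weakTop ℝ X) C ?_
  refine (@isOpen_iff_mem_nhds X (weakTop ℝ X) _).2 ?_
  intro x hx
  obtain ⟨f, r, hf, hr⟩ := geometric_hahn_banach_closed_point hC hC' hx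
  have hfc : @Continuous X ℝ (weakTop ℝ X) _ f :=
    continuous_iff_le_induced.2 (iInf_le _ f)
  have ho : @IsOpen X (weakTop ℝ X) (f ⁻¹' Ioi r) := @Continuous.isOpen_preimage X ℝ (weakTop ℝ X) _ f hfc _ isOpen_Ioi
  refine Filter.mem_of_superset ((@isOpen_iff_mem_nhds X (weakTop ℝ X) _).1 ho x hr) ?_
  intro y hy hyC
  exact lt_asymm (hf y hyC) hy

theorem lmcAux_support {Z : Type v} [TopologicalSpace Z] [T2Space Z] [MeasurableSpace Z]
    [BorelSpace Z] (m : Measure Z) [IsFiniteMeasure m] [m.Regular] {U G : Set Z}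
    (hU : IsOpen U) (hm : m U ≠ 0) (hG : ∀ᵐ y ∂m, y ∈ G) :
    ∃ y ∈ U, y ∈ G ∧ ∀ V, IsOpen V → y ∈ V → m V ≠ 0 := by
  obtain ⟨N, hN, hNm, hN0⟩ := exists_measurable_superset_of_null (ae_iff.1 hG)
  have h1 : m (U \ N) ≠ 0 := by
    rwa [measure_sdiff_null hN0]
  obtain ⟨C, hCs, hC, hC0⟩ := (hU.measurableSet.diff hNm).exists_lt_isCompact_of_ne_top
    (measure_ne_top m _) (pos_iff_ne_zero.2 h1)
  by_contra! hcon
  refine hC0.ne' (hC.measure_zero_of_nhdsWithin ?_)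
  intro y hy
  have hyG : y ∈ G := by
    by_contra h
    exact (hCs hy).2 (hN h)
  obtain ⟨V, hV, hyV, hV0⟩ := hcon y (hCs hy).1 hyG
  exact ⟨V, mem_nhdsWithin_of_mem_nhds (hV.mem_nhds hyV), hV0⟩

theorem lmcAux_hb {X : Type v} [AddCommGroup X] [Module ℝ X] [TopologicalSpace X]
    [IsTopologicalAddGroup X] [ContinuousSMul ℝ X]
    (p : Seminorm ℝ X) (hp : Continuous p) (v : X) :
    ∃ f : X →L[ℝ] ℝ, f v = p v ∧ ∀ x, f x ≤ p x := by
  by_cases hv : v = 0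
  · refine ⟨0, by simp [hv], fun x => by simp⟩
  obtain ⟨g, hg, hgp⟩ := Module.Dual.exists_extension_of_le_seminorm_real
    (Submodule.span ℝ {v})
    ((p v) • (LinearEquiv.toSpanNonzeroSingleton ℝ X v hv).symm.toLinearMap) (p := p) (by
      rintro ⟨x, hx⟩
      obtain ⟨c, rfl⟩ := Submodule.mem_span_singleton.1 hx
      have : (LinearEquiv.toSpanNonzeroSingleton ℝ X v hv).symm ⟨c • v, hx⟩ = c := by
        rw [LinearEquiv.symm_apply_eq]; rfl
      simp only [LinearMap.smul_apply, LinearEquiv.coe_coe, this, map_smul_eq_mul, smul_eq_mul,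
        Real.norm_eq_abs]
      rw [mul_comm]
      exact mul_le_mul_of_nonneg_right (le_abs_self c) (apply_nonneg p v))
  have hgc : Continuous g := by
    refine continuous_of_continuousAt_zero g ?_
    rw [ContinuousAt, map_zero]
    refine squeeze_zero_norm (a := p) (fun x => hgp x) ?_
    have := hp.tendsto 0
    rwa [map_zero] at this
  refine ⟨⟨g, hgc⟩, ?_, fun x => (le_abs_self _).trans (hgp x)⟩
  show g v = p v
  have h1 := hg ⟨v, Submodule.mem_span_singleton_self v⟩
  have : (LinearEquiv.toSpanNonzeroSingleton ℝ X v hv).symm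
      ⟨v, Submodule.mem_span_singleton_self v⟩ = 1 := by
    rw [LinearEquiv.symm_apply_eq]; ext; simp
  simpa [this] using h1

theorem lmcAux_ballcl {X : Type v} [AddCommGroup X] [Module ℝ X] [TopologicalSpace X]
    [IsTopologicalAddGroup X] (p : Seminorm ℝ X) (hp : Continuous p)
    {Z : Type v} [TopologicalSpace Z] (e : Z → X)
    (hcl : ∀ C : Set X, Convex ℝ C → IsClosed C → IsClosed (e ⁻¹' C)) :
    ∀ (x : X) (r : ℝ), IsClosed {y : Z | p (x - e y) ≤ r} := by
  intro x r
  have h1 : Convex ℝ (p.closedBall x r) := p.convex_closedBall x r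
  have h2 : IsClosed (p.closedBall x r) := by
    have : p.closedBall x r = (fun y => p (y - x)) ⁻¹' Iic r := by
      ext y; simp [Seminorm.mem_closedBall]
    rw [this]
    exact isClosed_Iic.preimage (hp.comp (continuous_id.sub continuous_const))
  convert hcl _ h1 h2 using 1
  ext y
  simp [Seminorm.mem_closedBall, map_sub_rev p x]

theorem lmcAux_zero {X : Type v} [AddCommGroup X] [Module ℝ X] [TopologicalSpace X]
    [IsTopologicalAddGroup X] [ContinuousSMul ℝ X]
    (p : Seminorm ℝ X) (hp : Continuous p)
    {Z : Type v} [TopologicalSpace Z] [CompactSpace Z] [T2Space Z] [MeasurableSpace Z]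
    [BorelSpace Z] (e : Z → X) (hconv : Convex ℝ (range e))
    (hf : ∀ f : X →L[ℝ] ℝ, Continuous fun z => f (e z))
    (hcl : ∀ C : Set X, Convex ℝ C → IsClosed C → IsClosed (e ⁻¹' C))
    (m : Measure Z) [IsFiniteMeasure m] [m.Regular] (x0 : Z)
    (hm : ∀ x : Z, ∀ᵐ y ∂m, p (e x - e y) = p (e x0 - e y)) :
    ∀ᵐ y ∂m, p (e x0 - e y) = 0 := by
  classical
  by_contra hne
  have hballcl := lmcAux_ballcl p hp e hcl
  obtain ⟨δ, hδ, hδm⟩ : ∃ δ > 0, m {y | δ < p (e x0 - e y)} ≠ 0 := by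
    by_contra! hcon
    apply hne
    have : ∀ᵐ y ∂m, ∀ n : ℕ, ¬ (1 / ((n : ℝ) + 1) < p (e x0 - e y)) := by
      rw [ae_all_iff]
      intro n
      rw [ae_iff]
      simpa using hcon (1 / ((n : ℝ) + 1)) (by positivity)
    filter_upwards [this] with y hy
    by_contra h
    obtain ⟨n, hn⟩ := exists_nat_one_div_lt
      (lt_of_le_of_ne (apply_nonneg p (e x0 - e y)) (Ne.symm h))
    exact hy n hn
  let U0 : Set Z := {y | δ < p (e x0 - e y)}
  have hU0 : IsOpen U0 := by
    have := (hballcl (e x0) δ).isOpen_compl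
    convert this using 1
    ext y; simp [U0]
  let State := {q : Finset Z × Set Z // IsOpen q.2 ∧ q.2 ⊆ U0 ∧ m q.2 ≠ 0}
  have step : ∀ q : State, ∃ (y : Z) (U' : Set Z) (f : X →L[ℝ] ℝ), y ∈ U' ∧ U' ⊆ q.1.2 ∧
      IsOpen U' ∧ m U' ≠ 0 ∧ (∀ x, f x ≤ p x) ∧
      ∀ z ∈ q.1.1, ∀ y' ∈ U', δ < f (e z - e y') := by
    rintro ⟨⟨s, U⟩, hU, hUs, hUm⟩
    let t := insert x0 s
    have htn : t.Nonempty := Finset.insert_nonempty _ _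
    have htc : (0 : ℝ) < t.card := by exact_mod_cast htn.card_pos
    have havg : ∑ z ∈ t, ((t.card : ℝ)⁻¹) • e z ∈ range e :=
      hconv.sum_mem (fun i _ => by positivity) (by simp [htc.ne']) (fun i _ => mem_range_self i)
    obtain ⟨w, hw⟩ := havg
    have hgood : ∀ᵐ y ∂m, y ∈ {y | p (e w - e y) = p (e x0 - e y) ∧
        ∀ z ∈ t, p (e z - e y) = p (e x0 - e y)} := by
      have h2 : ∀ᵐ y ∂m, ∀ z ∈ t, p (e z - e y) = p (e x0 - e y) :=
        (Finset.eventually_all t).2 (fun z _ => hm z)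
      filter_upwards [hm w, h2] with y h1 h2
      exact ⟨h1, h2⟩
    obtain ⟨y, hyU, ⟨hyw, hyt⟩, hysupp⟩ := lmcAux_support m hU hUm hgood
    obtain ⟨f, hfv, hfp⟩ := lmcAux_hb p hp (e w - e y)
    have hle : ∀ z ∈ t, f (e z - e y) ≤ p (e x0 - e y) := fun z hz => by
      rw [← hyt z hz]; exact hfp _
    have hsum : ∑ z ∈ t, f (e z - e y) = ∑ z ∈ t, p (e x0 - e y) := by
      have h1 : ∑ z ∈ t, (e z - e y) = (t.card : ℝ) • (e w - e y) := by
        rw [hw, Finset.sum_sub_distrib, Finset.sum_const, smul_sub, ← Finset.smul_sum, smul_smul,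
          mul_inv_cancel₀ htc.ne', one_smul, Nat.cast_smul_eq_nsmul]
      rw [← map_sum, h1, map_smul, hfv, hyw]
      simp
    have heq := (Finset.sum_eq_sum_iff_of_le hle).1 hsum
    have hopen : IsOpen (U ∩ ⋂ z ∈ s, {y' | δ < f (e z - e y')}) := by
      refine hU.inter (isOpen_biInter_finset fun z _ => ?_)
      refine isOpen_lt continuous_const ?_
      simp only [map_sub]
      exact continuous_const.sub (hf f)
    have hymem : y ∈ U ∩ ⋂ z ∈ s, {y' | δ < f (e z - e y')} := by
      refine ⟨hyU, ?_⟩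
      simp only [mem_iInter, mem_ofPred_eq]
      intro z hz
      rw [heq z (Finset.mem_insert_of_mem hz)]
      exact hUs hyU
    refine ⟨y, _, f, hymem, inter_subset_left, hopen, hysupp _ hopen hymem, hfp, ?_⟩
    intro z hz y' hy'
    have := hy'.2
    simp only [mem_iInter, mem_ofPred_eq] at this
    exact this z hz
  choose Y U' F hYU hUU hUo hUm hFp hF using step
  let next : State → State := fun q =>
    ⟨(insert (Y q) q.1.1, U' q), hUo q, (hUU q).trans q.2.2.1, hUm q⟩
  let st : ℕ → State := fun n => next^[n] ⟨(∅, U0), hU0, subset_rfl, hδm⟩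
  have hst : ∀ n, st (n + 1) = next (st n) := fun n => Function.iterate_succ_apply' _ _ _
  have hUmono : Antitone fun n => (st n).1.2 := antitone_nat_of_succ_le fun n => by
    rw [hst]; exact hUU _
  have hsmono : Monotone fun n => (st n).1.1 := monotone_nat_of_le_succ fun n => by
    rw [hst]; exact Finset.subset_insert _ _
  let y : ℕ → Z := fun n => Y (st n)
  have hymem : ∀ n, y n ∈ (st (n + 1)).1.2 := fun n => by rw [hst]; exact hYU _
  have hys : ∀ n, y n ∈ (st (n + 1)).1.1 := fun n => by
    rw [hst]; exact Finset.mem_insert_self _ _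
  obtain ⟨ys, hys'⟩ : ∃ x, MapClusterPt x Filter.atTop y := by
    obtain ⟨x, -, hx⟩ := isCompact_univ.exists_mapClusterPt (f := Filter.atTop) (u := y) (by simp)
    exact ⟨x, hx⟩
  have hclus : ∀ C : Set Z, IsClosed C → (∃ n, ∀ l ≥ n, y l ∈ C) → ys ∈ C := by
    rintro C hC ⟨n, hn⟩
    by_contra hcon
    obtain ⟨l, hl, hl'⟩ := Filter.frequently_atTop.1
      (hys'.frequently (hC.isOpen_compl.mem_nhds hcon)) n
    exact hl' (hn l hl)
  have hFy : ∀ n, ∀ z ∈ (st n).1.1, δ ≤ F (st n) (e z - e ys) := by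
    intro n z hz
    refine hclus {y' | δ ≤ F (st n) (e z - e y')} ?_ ⟨n, fun l hl => ?_⟩
    · refine isClosed_le continuous_const ?_
      simp only [map_sub]
      exact continuous_const.sub (hf _)
    · have h1 := hUmono (Nat.succ_le_succ hl) (hymem l)
      have h2 : y l ∈ U' (st n) := by
        have := hst n
        simp only [Nat.succ_eq_add_one, this] at h1
        exact h1
      exact (hF (st n) z hz _ h2).le
  let C : ℕ → Set X := fun n => convexHull ℝ (e '' (st n).1.1)
  have hCmono : Monotone C := fun i j hij =>
    convexHull_mono (image_mono (by exact_mod_cast hsmono hij))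
  have hD : Convex ℝ (⋃ n, C n) := (hCmono.directed_le).convex_iUnion fun n => convex_convexHull ℝ _
  have hDp : (⋃ n, C n) ⊆ {u | δ ≤ p (u - e ys)} := by
    refine iUnion_subset fun n => ?_
    have h1 : C n ⊆ {u | δ + F (st n) (e ys) ≤ F (st n) u} := by
      refine convexHull_min ?_ (convex_halfSpace_ge (F (st n)).toLinearMap.isLinear _)
      rintro _ ⟨z, hz, rfl⟩
      have := hFy n z hz
      rw [map_sub] at this
      simp only [mem_ofPred_eq]
      linarith
    intro u hu
    have h2 := h1 hu
    have h3 := hFp (st n) (u - e ys)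
    rw [map_sub] at h3
    simp only [mem_ofPred_eq] at h2 ⊢
    linarith
  have hcl1 : closure (⋃ n, C n) ⊆ {u | δ ≤ p (u - e ys)} :=
    closure_minimal hDp (isClosed_le continuous_const
      (hp.comp (continuous_id.sub continuous_const)))
  have hcl2 : ys ∈ e ⁻¹' closure (⋃ n, C n) := by
    refine hclus _ (hcl _ hD.closure isClosed_closure) ⟨0, fun l _ => ?_⟩
    exact subset_closure (mem_iUnion.2 ⟨l + 1, subset_convexHull ℝ _ ⟨_, hys l, rfl⟩⟩)
  have := hcl1 hcl2
  simp only [mem_ofPred_eq, sub_self, map_zero] at this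
  linarith

theorem lmcAux_bdd {X : Type v} [AddCommGroup X] [Module ℝ X] [TopologicalSpace X]
    [IsTopologicalAddGroup X]
    (p : Seminorm ℝ X) (hp : Continuous p)
    {Z : Type v} [TopologicalSpace Z] [CompactSpace Z] [T2Space Z] [Nonempty Z]
    (e : Z → X) (hinj : Function.Injective e) (hconv : Convex ℝ (range e))
    (hf : ∀ f : X →L[ℝ] ℝ, Continuous fun z => f (e z))
    (hcl : ∀ C : Set X, Convex ℝ C → IsClosed C → IsClosed (e ⁻¹' C))
    (hlift : ∀ h : ℝ × Z → Z, (∀ f : X →L[ℝ] ℝ, Continuous fun t => f (e (h t))) →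
      Continuous h) :
    ∃ R, ∀ z, p (e z) ≤ R := by
  have hcl0 : ∀ n : ℕ, IsClosed {y : Z | p (0 - e y) ≤ n} := fun n =>
    lmcAux_ballcl p hp e hcl 0 n
  obtain ⟨n, z0, hz0⟩ := nonempty_interior_of_iUnion_of_closed hcl0 (by
    ext z
    simp only [mem_iUnion, mem_ofPred_eq, mem_univ, iff_true]
    exact exists_nat_ge _)
  have hex : ∀ q : ℝ × Z, ∃ w, e w = (1 - (projIcc (0 : ℝ) 1 zero_le_one q.1 : ℝ)) • e z0 +
      (projIcc (0 : ℝ) 1 zero_le_one q.1 : ℝ) • e q.2 := by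
    intro q
    have h1 := (projIcc (0 : ℝ) 1 zero_le_one q.1).2
    exact hconv (mem_range_self z0) (mem_range_self q.2) (by linarith [h1.2]) h1.1 (by ring)
  choose T hT using hex
  have hTc : Continuous T := by
    apply hlift
    intro f
    simp only [hT, map_add, map_smul, smul_eq_mul]
    have h1 : Continuous fun q : ℝ × Z => (projIcc (0 : ℝ) 1 zero_le_one q.1 : ℝ) :=
      continuous_subtype_val.comp (continuous_projIcc.comp continuous_fst)
    have h2 : Continuous fun q : ℝ × Z => f (e q.2) := (hf f).comp continuous_snd
    exact ((continuous_const.sub h1).mul continuous_const).add (h1.mul h2)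
  have hV : ∀ᶠ t in nhds (0 : ℝ), ∀ z ∈ (univ : Set Z), T (t, z) ∈
      {y : Z | p (0 - e y) ≤ n} := by
    refine isCompact_univ.eventually_forall_of_forall_eventually
      (P := fun t z => T (t, z) ∈ {y : Z | p (0 - e y) ≤ n}) ?_
    intro z _
    have h0 : e (T (0, z)) = e z0 := by rw [hT]; simp
    have h2 : Filter.Tendsto T (nhds (0, z)) (nhds z0) := by
      have := hTc.tendsto (0, z)
      rwa [hinj h0] at this
    have h4 := h2 (isOpen_interior.mem_nhds hz0)
    filter_upwards [h4] with q hq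
    exact interior_subset (s := {y : Z | p (0 - e y) ≤ n}) hq
  obtain ⟨t, ht, ht0, ht1⟩ : ∃ t : ℝ, (∀ z ∈ (univ : Set Z), T (t, z) ∈
      {y : Z | p (0 - e y) ≤ n}) ∧ 0 < t ∧ t < 1 := by
    have h1 : ∀ᶠ t in nhdsWithin (0 : ℝ) (Ioi 0), t < 1 :=
      nhdsWithin_le_nhds (Iio_mem_nhds one_pos)
    have h2 := (hV.filter_mono (nhdsWithin_le_nhds (s := Ioi (0 : ℝ))))
    obtain ⟨t, ht⟩ := ((h2.and h1).and self_mem_nhdsWithin).exists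
    exact ⟨t, ht.1.1, ht.2, ht.1.2⟩
  refine ⟨(n + (1 - t) * p (e z0)) / t, fun z => ?_⟩
  rw [le_div_iff₀ ht0]
  have h1 := ht z (mem_univ z)
  simp only [mem_ofPred_eq, zero_sub, map_neg_eq_map, hT,
    projIcc_of_mem zero_le_one (show t ∈ Icc (0 : ℝ) 1 from ⟨ht0.le, ht1.le⟩)] at h1
  have h2 : t • e z = ((1 - t) • e z0 + t • e z) - (1 - t) • e z0 := by abel
  have h3 : p (t • e z) ≤ p ((1 - t) • e z0 + t • e z) + p ((1 - t) • e z0) := by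
    conv_lhs => rw [h2]
    exact map_sub_le_add p _ _
  rw [map_smul_eq_mul, map_smul_eq_mul, Real.norm_of_nonneg ht0.le,
    Real.norm_of_nonneg (by linarith)] at h3
  linarith

theorem lmcAux_ae {X : Type v} [AddCommGroup X] [Module ℝ X]
    (p : Seminorm ℝ X) {Z : Type v} [MeasurableSpace Z]
    (e : Z → X) (hconv : Convex ℝ (range e)) (m : Measure Z)
    (hint : ∀ x : Z, Integrable (fun y => p (e x - e y) ^ 2) m)
    (hint2 : ∀ x x' : Z, Integrable (fun y => (p (e x - e y) - p (e x' - e y)) ^ 2) m)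
    (hconst : ∀ x x' : Z, ∫ y, p (e x - e y) ^ 2 ∂m = ∫ y, p (e x' - e y) ^ 2 ∂m)
    (x x' : Z) : ∀ᵐ y ∂m, p (e x - e y) = p (e x' - e y) := by
  obtain ⟨w, hw⟩ := hconv (mem_range_self x) (mem_range_self x') (a := 1 / 2) (b := 1 / 2)
    (by norm_num) (by norm_num) (by norm_num)
  have hpt : ∀ y, p (e w - e y) ^ 2 ≤ (1 / 2) * p (e x - e y) ^ 2 + (1 / 2) * p (e x' - e y) ^ 2
      - (1 / 4) * (p (e x - e y) - p (e x' - e y)) ^ 2 := by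
    intro y
    have h1 : e w - e y = (1 / 2 : ℝ) • (e x - e y) + (1 / 2 : ℝ) • (e x' - e y) := by
      rw [hw]; module
    have h2 : p (e w - e y) ≤ 1 / 2 * p (e x - e y) + 1 / 2 * p (e x' - e y) := by
      rw [h1]
      refine (map_add_le_add p _ _).trans ?_
      rw [map_smul_eq_mul, map_smul_eq_mul]
      norm_num
    have h3 := apply_nonneg p (e w - e y)
    have h4 := pow_le_pow_left₀ h3 h2 2
    refine h4.trans (le_of_eq ?_)
    ring
  have h1 := integral_mono (hint w) ((((hint x).const_mul (1 / 2)).add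
    ((hint x').const_mul (1 / 2))).sub ((hint2 x x').const_mul (1 / 4))) hpt
  have h2 : ∫ y, ((1 / 2) * p (e x - e y) ^ 2 + (1 / 2) * p (e x' - e y) ^ 2
      - (1 / 4) * (p (e x - e y) - p (e x' - e y)) ^ 2) ∂m =
      (1 / 2) * ∫ y, p (e x - e y) ^ 2 ∂m + (1 / 2) * ∫ y, p (e x' - e y) ^ 2 ∂m
      - (1 / 4) * ∫ y, (p (e x - e y) - p (e x' - e y)) ^ 2 ∂m := by
    rw [integral_sub (f := fun y => (1 / 2) * p (e x - e y) ^ 2 + (1 / 2) * p (e x' - e y) ^ 2)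
      (((hint x).const_mul (1 / 2)).add ((hint x').const_mul (1 / 2)))
      ((hint2 x x').const_mul (1 / 4)), integral_add ((hint x).const_mul (1 / 2))
      ((hint x').const_mul (1 / 2)), integral_const_mul, integral_const_mul, integral_const_mul]
  have h3 : ∫ y, (p (e x - e y) - p (e x' - e y)) ^ 2 ∂m ≤ 0 := by
    have h4 := h1.trans_eq h2
    rw [hconst w x, hconst x' x] at h4
    linarith
  have h5 : ∫ y, (p (e x - e y) - p (e x' - e y)) ^ 2 ∂m = 0 :=
    le_antisymm h3 (integral_nonneg fun y => sq_nonneg _)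
  rw [integral_eq_zero_iff_of_nonneg (fun y => sq_nonneg _) (hint2 x x')] at h5
  filter_upwards [h5] with y hy
  have : (p (e x - e y) - p (e x' - e y)) ^ 2 = 0 := hy
  nlinarith [pow_eq_zero_iff (two_ne_zero) |>.1 this]

/-- A copy of the subtype of `K`, free of any topology instance. -/
def LmcZ {X : Type v} (K : Set X) : Type v := {x // x ∈ K}

theorem lmcAux_t2 {X : Type v} [AddCommGroup X] [Module ℝ X] [TopologicalSpace X] [T2Space X]
    [IsTopologicalAddGroup X] [ContinuousSMul ℝ X] [LocallyConvexSpace ℝ X] :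
    @T2Space X (weakTop ℝ X) := by
  refine @T2Space.mk X (weakTop ℝ X) ?_
  intro x y hxy
  obtain ⟨f, hf⟩ := geometric_hahn_banach_point_point hxy
  have hfc : @Continuous X ℝ (weakTop ℝ X) _ f :=
    continuous_iff_le_induced.2 (iInf_le _ f)
  obtain ⟨u, v, hu, hv, hxu, hyv, huv⟩ := t2_separation hf.ne
  exact ⟨f ⁻¹' u, f ⁻¹' v, @Continuous.isOpen_preimage X ℝ (weakTop ℝ X) _ f hfc _ hu, @Continuous.isOpen_preimage X ℝ (weakTop ℝ X) _ f hfc _ hv, hxu, hyv,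
    huv.preimage f⟩

theorem lmcAux_closed {X : Type v} [AddCommGroup X] [Module ℝ X] [TopologicalSpace X]
    {C : Set X} (hC : @IsClosed X (weakTop ℝ X) C) : IsClosed C := by
  have hle : ‹TopologicalSpace X› ≤ weakTop ℝ X :=
    le_iInf fun f => continuous_iff_le_induced.1 f.continuous
  exact hC.mono hle

theorem lmcAux_core {S : Type u} [Semigroup S] [TopologicalSpace S]
    (hLIM : HasLIM S (LMCset S))
    {X : Type v} [AddCommGroup X] [Module ℝ X] [TopologicalSpace X] [T2Space X]
    [IsTopologicalAddGroup X] [ContinuousSMul ℝ X] [LocallyConvexSpace ℝ X]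
    (K : Set X) (π : S → X → X) (hKn : K.Nonempty) (hK : Convex ℝ K)
    (hKc : @IsCompact X (weakTop ℝ X) K) (hKm : ∀ s : S, MapsTo (π s) K K)
    (hπ : ∀ s t : S, ∀ x ∈ K, π (s * t) x = π s (π t x))
    (hc1 : ∀ x ∈ K, @Continuous S X _ (weakTop ℝ X) fun s => π s x)
    (hc2 : ∀ s : S, @ContinuousOn X X (weakTop ℝ X) (weakTop ℝ X) (π s) K)
    (hmin : ∀ C ⊆ K, C.Nonempty → Convex ℝ C → IsClosed C → (∀ s, MapsTo (π s) C C) → C = K)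
    (p : Seminorm ℝ X) (hp : Continuous p)
    (hne : ∀ s : S, ∀ x ∈ K, ∀ y ∈ K, p (π s x - π s y) ≤ p (x - y)) :
    ∀ x ∈ K, ∀ y ∈ K, p (x - y) = 0 := by
  have hT2 : @T2Space X (weakTop ℝ X) := lmcAux_t2
  have hKcl : IsClosed K := lmcAux_closed (@IsCompact.isClosed X (weakTop ℝ X) hT2 K hKc)
  let e : LmcZ K → X := Subtype.val
  have hinj : Function.Injective e := Subtype.val_injective
  have heK : ∀ z, e z ∈ K := fun z => z.2
  have hran : range e = K := Subtype.range_val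
  letI tZ : TopologicalSpace (LmcZ K) := TopologicalSpace.induced e (weakTop ℝ X)
  have hind : @Topology.IsInducing _ X tZ (weakTop ℝ X) e :=
    @Topology.IsInducing.mk _ X tZ (weakTop ℝ X) e rfl
  have hec : @Continuous _ X tZ (weakTop ℝ X) e := continuous_induced_dom
  haveI : T2Space (LmcZ K) :=
    @T2Space.of_injective_continuous _ X tZ (weakTop ℝ X) hT2 e hinj hec
  haveI : CompactSpace (LmcZ K) := by
    constructor
    rw [@Topology.IsInducing.isCompact_iff _ X tZ (weakTop ℝ X) univ e hind]
    rwa [image_univ, hran]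
  letI : MeasurableSpace (LmcZ K) := borel _
  haveI : BorelSpace (LmcZ K) := ⟨rfl⟩
  obtain ⟨x0, hx0⟩ := hKn
  let z0 : LmcZ K := ⟨x0, hx0⟩
  haveI : Nonempty (LmcZ K) := ⟨z0⟩
  have hf : ∀ f : X →L[ℝ] ℝ, Continuous fun z => f (e z) := by
    intro f
    have hfc : @Continuous X ℝ (weakTop ℝ X) _ f :=
      continuous_iff_le_induced.2 (iInf_le _ f)
    exact @Continuous.comp _ X ℝ tZ (weakTop ℝ X) _ e f hfc hec
  have hcl : ∀ C : Set X, Convex ℝ C → IsClosed C → IsClosed (e ⁻¹' C) := by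
    intro C h1 h2
    exact @IsClosed.preimage _ X tZ (weakTop ℝ X) e hec C (lmcAux_mazur h1 h2)
  have hlift : ∀ h : ℝ × LmcZ K → LmcZ K,
      (∀ f : X →L[ℝ] ℝ, Continuous fun t => f (e (h t))) → Continuous h := by
    intro h hh
    rw [continuous_induced_rng]
    unfold weakTop
    rw [continuous_iInf_rng]
    intro f
    rw [continuous_induced_rng]
    exact hh f
  let a : S → LmcZ K → LmcZ K := fun s z => ⟨π s (e z), hKm s z.2⟩
  have hae : ∀ s z, e (a s z) = π s (e z) := fun s z => rfl
  have hac1 : ∀ z, Continuous fun s => a s z := by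
    intro z
    rw [continuous_induced_rng]
    exact hc1 (e z) z.2
  have hac2 : ∀ s, Continuous (a s) := by
    intro s
    rw [continuous_induced_rng]
    exact @ContinuousOn.comp_continuous _ X X tZ (weakTop ℝ X) (weakTop ℝ X) (π s) e K
      (hc2 s) hec heK
  obtain ⟨m, hm1, hmr, hminv⟩ := lmcAux_measure hLIM z0 a
    (fun s t z => Subtype.ext (hπ s t (e z) z.2)) hac1 hac2
  have hconv : Convex ℝ (range e) := by rwa [hran]
  obtain ⟨R0, hR0⟩ := lmcAux_bdd p hp e hinj hconv hf hcl hlift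
  have hR : ∀ x ∈ K, ∀ y ∈ K, p (x - y) ≤ 2 * R0 := by
    intro x hx y hy
    have h1 := map_sub_le_add p x y
    have h2 := hR0 ⟨x, hx⟩
    have h3 := hR0 ⟨y, hy⟩
    change p x ≤ _ at h2
    change p y ≤ _ at h3
    linarith
  have hmeas : ∀ x : X, Measurable fun z : LmcZ K => p (x - e z) := by
    intro x
    refine measurable_of_Iic fun r => ?_
    exact (lmcAux_ballcl p hp e hcl x r).measurableSet
  have hint : ∀ x ∈ K, Integrable (fun y => p (x - e y) ^ 2) m := by
    intro x hx
    refine Integrable.of_bound ((hmeas x).pow_const 2).aestronglyMeasurable ((2 * R0) ^ 2) ?_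
    refine Filter.Eventually.of_forall fun y => ?_
    rw [Real.norm_of_nonneg (sq_nonneg _)]
    exact pow_le_pow_left₀ (apply_nonneg p _) (hR x hx _ (heK y)) 2
  have hint2 : ∀ x ∈ K, ∀ x' ∈ K,
      Integrable (fun y => (p (x - e y) - p (x' - e y)) ^ 2) m := by
    intro x hx x' hx'
    refine Integrable.of_bound
      (((hmeas x).sub (hmeas x')).pow_const 2).aestronglyMeasurable ((2 * R0) ^ 2) ?_
    refine Filter.Eventually.of_forall fun y => ?_
    rw [Real.norm_of_nonneg (sq_nonneg _)]
    refine sq_le_sq' ?_ ?_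
    · linarith [apply_nonneg p (x - e y), hR x' hx' _ (heK y)]
    · linarith [apply_nonneg p (x' - e y), hR x hx _ (heK y)]
  let φ : X → ℝ := fun x => ∫ y, p (x - e y) ^ 2 ∂m
  have hφinv : ∀ s, ∀ x ∈ K, φ (π s x) ≤ φ x := by
    intro s x hx
    have h1 : φ (π s x) = ∫ y, p (π s x - e (a s y)) ^ 2 ∂m := by
      show ∫ y, p (π s x - e y) ^ 2 ∂m = _
      conv_lhs => rw [← hminv s]
      rw [integral_map (hac2 s).aemeasurable ((hmeas _).pow_const 2).aestronglyMeasurable]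
    rw [h1]
    refine integral_mono_of_nonneg (Filter.Eventually.of_forall fun y => sq_nonneg _)
      (hint x hx) (Filter.Eventually.of_forall fun y => ?_)
    exact pow_le_pow_left₀ (apply_nonneg p _) (hne s x hx _ (heK y)) 2
  have hφconv : ∀ x ∈ K, ∀ x' ∈ K, ∀ c d : ℝ, 0 ≤ c → 0 ≤ d → c + d = 1 →
      φ (c • x + d • x') ≤ c * φ x + d * φ x' := by
    intro x hx x' hx' c d hc hd hcd
    have h1 : c * φ x + d * φ x' = ∫ y, (c * p (x - e y) ^ 2 + d * p (x' - e y) ^ 2) ∂m := by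
      rw [integral_add ((hint x hx).const_mul c) ((hint x' hx').const_mul d),
        integral_const_mul, integral_const_mul]
    rw [h1]
    refine integral_mono_of_nonneg (Filter.Eventually.of_forall fun y => sq_nonneg _)
      (((hint x hx).const_mul c).add ((hint x' hx').const_mul d))
      (Filter.Eventually.of_forall fun y => ?_)
    have h2 : c • x + d • x' - e y = c • (x - e y) + d • (x' - e y) := by
      have : e y = (c + d) • e y := by rw [hcd, one_smul]
      conv_lhs => rw [this]
      module
    have h3 : p (c • x + d • x' - e y) ≤ c * p (x - e y) + d * p (x' - e y) := by
      rw [h2]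
      refine (map_add_le_add p _ _).trans ?_
      rw [map_smul_eq_mul, map_smul_eq_mul, Real.norm_of_nonneg hc, Real.norm_of_nonneg hd]
    have h4 := pow_le_pow_left₀ (apply_nonneg p _) h3 2
    refine h4.trans ?_
    have hd' : d = 1 - c := by linarith
    subst hd'
    nlinarith [mul_nonneg (mul_nonneg hc hd) (sq_nonneg (p (x - e y) - p (x' - e y)))]
  have hφcont : ContinuousOn φ K := by
    intro x hx
    rw [ContinuousWithinAt, tendsto_iff_dist_tendsto_zero]
    have hlim : Filter.Tendsto (fun x' => (4 * R0) * p (x' - x)) (nhdsWithin x K) (nhds 0) := by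
      have : Continuous fun x' => (4 * R0) * p (x' - x) :=
        continuous_const.mul (hp.comp (continuous_id.sub continuous_const))
      have h1 := this.tendsto x
      simp only [sub_self, map_zero, mul_zero] at h1
      exact h1.mono_left nhdsWithin_le_nhds
    refine squeeze_zero' (Filter.Eventually.of_forall fun _ => dist_nonneg) ?_ hlim
    filter_upwards [self_mem_nhdsWithin] with x' hx'
    rw [Real.dist_eq, ← integral_sub (hint x' hx') (hint x hx), ← Real.norm_eq_abs]
    refine (norm_integral_le_of_norm_le_const (C := (4 * R0) * p (x' - x))
      (Filter.Eventually.of_forall fun y => ?_)).trans (by simp)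
    rw [Real.norm_eq_abs, sq_sub_sq, abs_mul]
    have h1 : |p (x' - e y) + p (x - e y)| ≤ 4 * R0 := by
      rw [abs_of_nonneg (add_nonneg (apply_nonneg p _) (apply_nonneg p _))]
      linarith [hR x hx _ (heK y), hR x' hx' _ (heK y)]
    have h2 : |p (x' - e y) - p (x - e y)| ≤ p (x' - x) := by
      have := abs_sub_map_le_sub p (x' - e y) (x - e y)
      simpa using this
    exact mul_le_mul h1 h2 (abs_nonneg _) ((abs_nonneg _).trans h1)
  have hφle : ∀ x ∈ K, ∀ x' ∈ K, φ x' ≤ φ x := by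
    intro x hx x' hx'
    have hC := hmin (K ∩ φ ⁻¹' Iic (φ x)) inter_subset_left ⟨x, hx, le_refl (φ x)⟩ ?_ ?_ ?_
    · have : x' ∈ K ∩ φ ⁻¹' Iic (φ x) := by rw [hC]; exact hx'
      exact this.2
    · rintro y ⟨hy, hy'⟩ z ⟨hz, hz'⟩ c d hc hd hcd
      refine ⟨hK hy hz hc hd hcd, (hφconv y hy z hz c d hc hd hcd).trans ?_⟩
      have h1 := mul_le_mul_of_nonneg_left (show φ y ≤ φ x from hy') hc
      have h2 := mul_le_mul_of_nonneg_left (show φ z ≤ φ x from hz') hd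
      have h3 : c * φ x + d * φ x = φ x := by rw [← add_mul, hcd, one_mul]
      linarith
    · exact hφcont.preimage_isClosed_of_isClosed hKcl isClosed_Iic
    · rintro s y ⟨hy, hy'⟩
      exact ⟨hKm s hy, (hφinv s y hy).trans hy'⟩
  have hae := lmcAux_ae p e hconv m (fun x => hint _ (heK x))
    (fun x x' => hint2 _ (heK x) _ (heK x'))
    (fun x x' => le_antisymm (hφle _ (heK x') _ (heK x)) (hφle _ (heK x) _ (heK x')))
  have hz : ∀ z : LmcZ K, ∀ᵐ y ∂m, p (e z - e y) = 0 := fun z =>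
    lmcAux_zero p hp e hconv hf hcl m z (fun x => hae x z)
  intro x hx y hy
  obtain ⟨w, hw1, hw2⟩ := ((hz ⟨x, hx⟩).and (hz ⟨y, hy⟩)).exists
  change p (x - e w) = 0 at hw1
  change p (y - e w) = 0 at hw2
  have h1 := map_sub_le_add p (x - e w) (y - e w)
  rw [hw1, hw2, sub_sub_sub_cancel_right] at h1
  exact le_antisymm (by simpa using h1) (apply_nonneg p _)

/-- **Theorem (LMC)**: if `LMC(S)` has a left invariant mean, then `S` has property (G). -/
theorem propertyG_of_LMC_hasLIM
    {S : Type u} [Semigroup S] [TopologicalSpace S] [T2Space S]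
    (hS : IsSemitopologicalSemigroup S)
    (hLIM : HasLIM S (LMCset S)) :
    PropertyG.{u, v} S := by
  intro X _ _ _ _ ι _ Q hQ K π hKn hK hKc hKm hπ hc1 hc2 hne
  haveI := hQ.topologicalAddGroup
  haveI := hQ.continuousSMul
  haveI := hQ.toLocallyConvexSpace
  have hT2 : @T2Space X (weakTop ℝ X) := lmcAux_t2
  let F : Set (Set X) := {C | C ⊆ K ∧ C.Nonempty ∧ Convex ℝ C ∧ @IsCompact X (weakTop ℝ X) C ∧
    ∀ s, MapsTo (π s) C C}
  obtain ⟨M, -, hM⟩ := zorn_superset_nonempty F (by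
    intro c hc hchain hcn
    refine ⟨⋂₀ c, ⟨?_, ?_, ?_, ?_, ?_⟩, fun s hs => sInter_subset_of_mem hs⟩
    · obtain ⟨C, hC⟩ := hcn
      exact (sInter_subset_of_mem hC).trans (hc hC).1
    · haveI : Nonempty c := hcn.to_subtype
      refine @IsCompact.nonempty_sInter_of_directed_nonempty_isCompact_isClosed X (weakTop ℝ X)
        c _ ?_ (fun U hU => (hc hU).2.1) (fun U hU => (hc hU).2.2.2.1)
        (fun U hU => @IsCompact.isClosed X (weakTop ℝ X) hT2 U (hc hU).2.2.2.1)
      exact IsChain.directedOn hchain.symm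
    · exact convex_sInter fun U hU => (hc hU).2.2.1
    · obtain ⟨C, hC⟩ := hcn
      refine @IsCompact.of_isClosed_subset X (weakTop ℝ X) C _ (hc hC).2.2.2.1 ?_
        (sInter_subset_of_mem hC)
      exact @isClosed_sInter X (weakTop ℝ X) c
        (fun U hU => @IsCompact.isClosed X (weakTop ℝ X) hT2 U (hc hU).2.2.2.1)
    · intro s x hx U hU
      exact (hc hU).2.2.2.2 s (hx U hU)) K ⟨subset_rfl, hKn, hK, hKc, hKm⟩
  obtain ⟨⟨hMK, hMn, hMc, hMcpt, hMm⟩, hMmin⟩ := hM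
  have key : ∀ i, ∀ x ∈ M, ∀ y ∈ M, Q i (x - y) = 0 := by
    intro i
    refine lmcAux_core hLIM M π hMn hMc hMcpt hMm (fun s t x hx => hπ s t x (hMK hx))
      (fun x hx => hc1 x (hMK hx))
      (fun s => @ContinuousOn.mono X X (weakTop ℝ X) (weakTop ℝ X) _ _ _ (hc2 s) hMK) ?_
      (Q i) (hQ.continuous_seminorm i)
      (fun s x hx y hy => hne i s x (hMK hx) y (hMK hy))
    intro C hCM hCn hCc hCcl hCm
    refine hCM.antisymm (hMmin ⟨hCM.trans hMK, hCn, hCc, ?_, hCm⟩ hCM)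
    exact @IsCompact.of_isClosed_subset X (weakTop ℝ X) M C hMcpt (lmcAux_mazur hCc hCcl) hCM
  obtain ⟨x, hx⟩ := hMn
  refine ⟨x, hMK hx, fun s => ?_⟩
  by_contra hcon
  obtain ⟨i, hi⟩ := hQ.separating_of_T1 (π s x - x) (sub_ne_zero.2 hcon)
  exact hi (key i _ (hMm s hx) _ hx)
end
end
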